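/- For every c > 0 there exist constants N > 0 and C > 0 such that for all ν ≥ N, every positive integer k, and every j that is the k-th positive zero of J_ν with j ≥ (1+c)ν, one has | j·g(ν/j) − (k − 1/4) | ≤ C/(ν + k). -/

import Mathlib

open Real MeasureTheory Set

/-- The Bessel function of the first kind of order `ν ≥ 0`, for `x > 0`, via the
integral representation. -/
noncomputable def besselJ (ν x : ℝ) : ℝ :=
  (1 / π) * (∫ θ in (0:ℝ)..π, Real.cos (x * Real.sin θ - ν * θ)) -
    (Real.sin (ν * π) / π) * ∫ t in Set.Ioi (0:ℝ), Real.exp (-x * Real.sinh t - ν * t)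

/-- The function `g(t) = (√(1-t²) - t arccos t)/π`. -/
noncomputable def gfun (t : ℝ) : ℝ := (Real.sqrt (1 - t ^ 2) - t * Real.arccos t) / π

/-- `j` is the `k`-th positive zero of `J_ν`: `j > 0`, `J_ν(j) = 0`, and there are exactly
`k - 1` zeros of `J_ν` in `(0, j)`. -/
def IsKthZero (ν : ℝ) (k : ℕ) (j : ℝ) : Prop :=
  0 < j ∧ besselJ ν j = 0 ∧ {x : ℝ | 0 < x ∧ x < j ∧ besselJ ν x = 0}.ncard = k - 1

open Filter Topology


noncomputable def bPhi (ν t : ℝ) : ℝ := √(exp t ^ 2 - ν ^ 2) - ν * arccos (ν / exp t)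
noncomputable def bR (ν t : ℝ) : ℝ := exp t ^ 2 / (2 * √(exp t ^ 2 - ν ^ 2) ^ 3)

lemma bS_pos {ν t : ℝ} (hν : 0 < ν) (ht : ν < exp t) : 0 < exp t ^ 2 - ν ^ 2 := by nlinarith

lemma bp_pos {ν t : ℝ} (hν : 0 < ν) (ht : ν < exp t) : 0 < √(exp t ^ 2 - ν ^ 2) :=
  Real.sqrt_pos.2 (bS_pos hν ht)

lemma bp_sq {ν t : ℝ} (hν : 0 < ν) (ht : ν < exp t) : √(exp t ^ 2 - ν ^ 2) ^ 2 = exp t ^ 2 - ν ^ 2 :=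
  Real.sq_sqrt (bS_pos hν ht).le

lemma bp_deriv {ν t : ℝ} (hν : 0 < ν) (ht : ν < exp t) :
    HasDerivAt (fun t => √(exp t ^ 2 - ν ^ 2)) (exp t ^ 2 / √(exp t ^ 2 - ν ^ 2)) t := by
  have h1 : HasDerivAt (fun t => exp t ^ 2 - ν ^ 2) (2 * exp t ^ 2) t := by
    have := ((Real.hasDerivAt_exp t).pow 2).sub_const (ν ^ 2)
    refine this.congr_deriv ?_
    simp; ring
  have := h1.sqrt (bS_pos hν ht).ne'
  refine this.congr_deriv ?_
  have := bp_pos hν ht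
  field_simp

lemma bPhi_deriv {ν t : ℝ} (hν : 0 < ν) (ht : ν < exp t) :
    HasDerivAt (bPhi ν) (√(exp t ^ 2 - ν ^ 2)) t := by
  have hx := Real.exp_pos t
  have h0 : HasDerivAt (fun t => ν / exp t) (-(ν / exp t)) t := by
    have := (hasDerivAt_const t ν).div (Real.hasDerivAt_exp t) hx.ne'
    refine this.congr_deriv ?_
    field_simp; ring
  have h1 : ν / exp t < 1 := (div_lt_one hx).2 ht
  have h2 : 0 < ν / exp t := by positivity
  have h3 := (Real.hasDerivAt_arccos (x := ν / exp t) (by linarith) (by linarith)).comp t h0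
  have h4 := (bp_deriv hν ht).sub (h3.const_mul ν)
  have h5 : √(1 - (ν / exp t) ^ 2) = √(exp t ^ 2 - ν ^ 2) / exp t := by
    rw [← Real.sqrt_sq hx.le, ← Real.sqrt_div' _ (by positivity), Real.sqrt_sq hx.le]
    congr 1; field_simp
  refine h4.congr_deriv ?_
  rw [h5]
  have hp := bp_pos hν ht
  have hq := bp_sq hν ht
  field_simp
  linarith

lemma bR_deriv {ν t : ℝ} (hν : 0 < ν) (ht : ν < exp t) :
    HasDerivAt (bR ν) (exp t ^ 2 / √(exp t ^ 2 - ν ^ 2) ^ 3 -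
      3 * exp t ^ 4 / (2 * √(exp t ^ 2 - ν ^ 2) ^ 5)) t := by
  have hp := bp_pos hν ht
  have h1 := ((Real.hasDerivAt_exp t).pow 2).div (((bp_deriv hν ht).pow 3).const_mul 2)
    (by simp only [Pi.pow_apply]; positivity)
  refine h1.congr_deriv ?_
  simp only [Pi.pow_apply]
  field_simp
  push_cast
  ring

lemma bz_deriv {ν t : ℝ} {y y' : ℝ → ℝ} (hν : 0 < ν) (ht : ν < exp t)
    (hy : HasDerivAt y (y' t) t) (hy' : HasDerivAt y' (-(exp t ^ 2 - ν ^ 2) * y t) t) (h0 : y t ≠ 0) :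
    HasDerivAt (fun t => y' t / (√(exp t ^ 2 - ν ^ 2) * y t))
      (-√(exp t ^ 2 - ν ^ 2) * (1 + (y' t / (√(exp t ^ 2 - ν ^ 2) * y t)) ^ 2 +
        2 * bR ν t * (y' t / (√(exp t ^ 2 - ν ^ 2) * y t)))) t := by
  have hp := bp_pos hν ht
  have hq := bp_sq hν ht
  have h1 := hy'.div ((bp_deriv hν ht).mul hy) (mul_ne_zero hp.ne' h0)
  refine h1.congr_deriv ?_
  simp only [Pi.mul_apply]
  rw [bR]
  set p := √(exp t ^ 2 - ν ^ 2) with hpdef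
  rw [← hq]
  field_simp
  ring

noncomputable def bF (ν : ℝ) (y y' : ℝ → ℝ) (t : ℝ) : ℝ :=
  π / 2 - arctan (y' t / (√(exp t ^ 2 - ν ^ 2) * y t)) - bPhi ν t +
    bR ν t * (1 - 1 / (1 + (y' t / (√(exp t ^ 2 - ν ^ 2) * y t)) ^ 2))

noncomputable def bG (ν : ℝ) (y y' : ℝ → ℝ) (t : ℝ) : ℝ :=
  π / 2 - arctan (y' t / (√(exp t ^ 2 - ν ^ 2) * y t) + bR ν t) - bPhi ν t

lemma bF_deriv {ν t : ℝ} {y y' : ℝ → ℝ} (hν : 0 < ν) (ht : ν < exp t)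
    (hy : HasDerivAt y (y' t) t) (hy' : HasDerivAt y' (-(exp t ^ 2 - ν ^ 2) * y t) t) (h0 : y t ≠ 0) :
    ∃ d ≤ 0, HasDerivAt (bF ν y y') d t := by
  have hz := bz_deriv hν ht hy hy' h0
  have hr := bR_deriv hν ht
  have hph := bPhi_deriv hν ht
  have hp := bp_pos hν ht
  have hq := bp_sq hν ht
  set z : ℝ := y' t / (√(exp t ^ 2 - ν ^ 2) * y t) with hzdef
  have h1 : HasDerivAt (bF ν y y') _ t := (((hz.arctan).const_sub (π/2)).sub hph).add
    (hr.mul ((((hz.pow 2).const_add 1).fun_inv (by simp only [Pi.pow_apply]; positivity)).const_sub 1)) |>.congr_of_eventuallyEq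
    (Eventually.of_forall fun s => by simp [bF])
  refine ⟨_, ?_, h1⟩
  simp only [Pi.pow_apply, ← hzdef]
  have hr0 : 0 < bR ν t := by unfold bR; positivity
  set p := √(exp t ^ 2 - ν ^ 2) with hpdef
  set r := bR ν t
  have hr' : exp t ^ 2 / p ^ 3 - 3 * exp t ^ 4 / (2 * p ^ 5) ≤ 0 := by
    have : exp t ^ 2 / p ^ 3 - 3 * exp t ^ 4 / (2 * p ^ 5) = -(exp t ^ 2 * (3 * exp t ^ 2 - 2 * p ^ 2)) / (2 * p^5) := by
      field_simp; ring
    rw [this, hq]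
    apply div_nonpos_of_nonpos_of_nonneg _ (by positivity)
    have : 0 ≤ exp t ^ 2 * (3 * exp t ^ 2 - 2 * (exp t ^ 2 - ν ^ 2)) := by
      apply mul_nonneg (by positivity); nlinarith [sq_nonneg (exp t)]
    linarith
  set r' := exp t ^ 2 / p ^ 3 - 3 * exp t ^ 4 / (2 * p ^ 5)
  have key : r' * (z^2/(1+z^2)) - 4 * r^2 * z^2 * p / (1+z^2)^2 ≤ 0 := by
    have : r' * (z^2/(1+z^2)) ≤ 0 := mul_nonpos_of_nonpos_of_nonneg hr' (by positivity)
    have : 0 ≤ 4 * r^2 * z^2 * p / (1+z^2)^2 := by positivity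
    linarith
  refine le_trans (le_of_eq ?_) key
  have : (1 + z^2) ≠ 0 := by positivity
  field_simp
  push_cast
  ring

lemma bG_deriv {ν t : ℝ} {y y' : ℝ → ℝ} (hν : 0 < ν) (ht : ν < exp t)
    (hy : HasDerivAt y (y' t) t) (hy' : HasDerivAt y' (-(exp t ^ 2 - ν ^ 2) * y t) t) (h0 : y t ≠ 0) :
    ∃ d ≥ 0, HasDerivAt (bG ν y y') d t := by
  have hz := bz_deriv hν ht hy hy' h0
  have hr := bR_deriv hν ht
  have hph := bPhi_deriv hν ht
  have hp := bp_pos hν ht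
  have hq := bp_sq hν ht
  have h1 : HasDerivAt (bG ν y y') _ t := (((hz.add hr).arctan).const_sub (π/2)).sub hph
  refine ⟨_, ?_, h1⟩
  simp only [Pi.add_apply]
  set p := √(exp t ^ 2 - ν ^ 2) with hpdef
  set z : ℝ := y' t / (p * y t) with hzdef
  have hr' : exp t ^ 2 / p ^ 3 - 3 * exp t ^ 4 / (2 * p ^ 5) + p * bR ν t ^ 2 ≤ 0 := by
    have : exp t ^ 2 / p ^ 3 - 3 * exp t ^ 4 / (2 * p ^ 5) + p * bR ν t ^ 2 = -(exp t ^ 2 * (5 * exp t ^ 2 - 4 * p ^ 2)) / (4 * p^5) := by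
      unfold bR; rw [← hpdef]
      field_simp; ring
    rw [this, hq]
    apply div_nonpos_of_nonpos_of_nonneg _ (by positivity)
    have : 0 ≤ exp t ^ 2 * (5 * exp t ^ 2 - 4 * (exp t ^ 2 - ν ^ 2)) := by
      apply mul_nonneg (by positivity); nlinarith [sq_nonneg (exp t)]
    linarith
  set r' := exp t ^ 2 / p ^ 3 - 3 * exp t ^ 4 / (2 * p ^ 5)
  set r := bR ν t
  have key : 0 ≤ -(r' + p * r^2) / (1 + (z+r)^2) := div_nonneg (by linarith) (by positivity)
  refine le_trans key (le_of_eq ?_)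
  have : (1 + (z+r)^2) ≠ 0 := by positivity
  field_simp
  ring


structure BSol (ν : ℝ) (y y' : ℝ → ℝ) : Prop where
  hy : ∀ t, HasDerivAt y (y' t) t
  hy' : ∀ t, HasDerivAt y' (-(exp t ^ 2 - ν ^ 2) * y t) t

lemma BSol.neg {ν : ℝ} {y y' : ℝ → ℝ} (h : BSol ν y y') : BSol ν (fun t => - y t) (fun t => - y' t) :=
  ⟨fun t => (h.hy t).fun_neg, fun t => (h.hy' t).fun_neg.congr_deriv (by ring)⟩

lemma BSol.cont {ν : ℝ} {y y' : ℝ → ℝ} (h : BSol ν y y') : Continuous y :=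
  continuous_iff_continuousAt.2 fun t => (h.hy t).continuousAt

lemma BSol.cont' {ν : ℝ} {y y' : ℝ → ℝ} (h : BSol ν y y') : Continuous y' :=
  continuous_iff_continuousAt.2 fun t => (h.hy' t).continuousAt

lemma BSol.uniq {ν : ℝ} {y y' : ℝ → ℝ} (h : BSol ν y y') {a : ℝ} (h0 : y a = 0) (h0' : y' a = 0) (t : ℝ) :
    y t = 0 := by
  have hE : ∀ t, HasDerivAt (fun t => y t ^ 2 + y' t ^ 2)
      (2 * y t * y' t * (1 - (exp t ^ 2 - ν ^ 2))) t := fun t =>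
    (((h.hy t).fun_pow 2).fun_add ((h.hy' t).fun_pow 2)).congr_deriv (by push_cast; ring)
  have hK : ∀ t, HasDerivAt (fun t => (1 + ν ^ 2) * t + exp t ^ 2 / 2) (1 + ν ^ 2 + exp t ^ 2) t := fun t =>
    (((hasDerivAt_id t).const_mul (1 + ν ^ 2)).fun_add
      (((Real.hasDerivAt_exp t).fun_pow 2).div_const 2)).congr_deriv (by push_cast; ring)
  have hb : ∀ t, |2 * y t * y' t * (1 - (exp t ^ 2 - ν ^ 2))| ≤
      (y t ^ 2 + y' t ^ 2) * (1 + ν ^ 2 + exp t ^ 2) := by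
    intro t
    rw [abs_mul]
    apply mul_le_mul _ _ (abs_nonneg _) (by positivity)
    · rw [abs_le]; constructor <;> nlinarith [sq_nonneg (y t + y' t), sq_nonneg (y t - y' t)]
    · rw [abs_le]; constructor <;> nlinarith [sq_nonneg (exp t), sq_nonneg ν]
  have hmono : Monotone (fun t => (y t ^ 2 + y' t ^ 2) * exp ((1 + ν ^ 2) * t + exp t ^ 2 / 2)) := by
    apply monotone_of_hasDerivAt_nonneg (fun t => (hE t).fun_mul (hK t).exp)
    intro t
    have := neg_le_of_abs_le (hb t)
    have h2 := Real.exp_pos ((1 + ν ^ 2) * t + exp t ^ 2 / 2)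
    simp only [Pi.zero_apply]
    nlinarith
  have hanti : Antitone (fun t => (y t ^ 2 + y' t ^ 2) * exp (-((1 + ν ^ 2) * t + exp t ^ 2 / 2))) := by
    apply antitone_of_hasDerivAt_nonpos (fun t => (hE t).fun_mul (hK t).fun_neg.exp)
    intro t
    have := le_of_abs_le (hb t)
    have h2 := Real.exp_pos (-((1 + ν ^ 2) * t + exp t ^ 2 / 2))
    simp only [Pi.zero_apply]
    nlinarith
  have : y t ^ 2 + y' t ^ 2 ≤ 0 := by
    rcases le_total t a with hta | hta
    · have := hmono hta
      simp only [h0, h0'] at this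
      have h2 := Real.exp_pos ((1 + ν ^ 2) * t + exp t ^ 2 / 2)
      by_contra hcon
      push Not at hcon
      have := mul_pos hcon h2
      norm_num at *
      linarith
    · have := hanti hta
      simp only [h0, h0'] at this
      have h2 := Real.exp_pos (-((1 + ν ^ 2) * t + exp t ^ 2 / 2))
      by_contra hcon
      push Not at hcon
      have := mul_pos hcon h2
      norm_num at *
      linarith
  have : y t ^ 2 = 0 := by nlinarith [sq_nonneg (y t), sq_nonneg (y' t)]
  simpa using this

/-- behaviour of `z` at right end -/
lemma BSol.z_right {ν : ℝ} {y y' : ℝ → ℝ} (h : BSol ν y y') (hν : 0 < ν) {a b : ℝ} (hab : a < b)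
    (hb : ν < exp b) (hpos : ∀ t ∈ Ioo a b, 0 < y t) (h0 : y b = 0) (h1 : y' b ≠ 0) :
    Tendsto (fun t => y' t / (√(exp t ^ 2 - ν ^ 2) * y t)) (𝓝[<] b) atBot := by
  have hev : ∀ᶠ t in 𝓝[<] b, t ∈ Ioo a b := Ioo_mem_nhdsLT hab
  have hneg : y' b ≤ 0 := by
    have hs := (hasDerivAt_iff_tendsto_slope.1 (h.hy b)).mono_left
      (nhdsWithin_mono b (fun t (ht : t < b) => ht.ne) : 𝓝[<] b ≤ 𝓝[≠] b)
    refine le_of_tendsto hs ?_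
    filter_upwards [hev] with t ht
    rw [slope_def_field, h0]
    exact div_nonpos_of_nonneg_of_nonpos (by linarith [hpos t ht]) (by linarith [ht.2])
  have hlt : y' b < 0 := lt_of_le_of_ne hneg h1
  have hden : Tendsto (fun t => √(exp t ^ 2 - ν ^ 2) * y t) (𝓝[<] b) (𝓝[>] 0) := by
    apply tendsto_nhdsWithin_of_tendsto_nhds_of_eventually_within
    · have : Continuous (fun t => √(exp t ^ 2 - ν ^ 2) * y t) := by
        have := h.cont
        fun_prop
      have h2 := this.tendsto b
      simp only [h0, mul_zero] at h2
      exact h2.mono_left nhdsWithin_le_nhds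
    · have : ∀ᶠ t in 𝓝[<] b, ν < exp t :=
        (Real.continuous_exp.tendsto b).mono_left nhdsWithin_le_nhds |>.eventually_const_lt hb
      filter_upwards [hev, this] with t ht ht2
      exact mul_pos (bp_pos hν ht2) (hpos t ht)
  have := Tendsto.neg_mul_atTop hlt ((h.cont'.tendsto b).mono_left nhdsWithin_le_nhds)
    (tendsto_inv_nhdsGT_zero.comp hden)
  simpa [div_eq_mul_inv] using this

lemma BSol.z_left {ν : ℝ} {y y' : ℝ → ℝ} (h : BSol ν y y') (hν : 0 < ν) {a b : ℝ} (hab : a < b)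
    (ha : ν < exp a) (hpos : ∀ t ∈ Ioo a b, 0 < y t) (h0 : y a = 0) (h1 : y' a ≠ 0) :
    Tendsto (fun t => y' t / (√(exp t ^ 2 - ν ^ 2) * y t)) (𝓝[>] a) atTop := by
  have hev : ∀ᶠ t in 𝓝[>] a, t ∈ Ioo a b := Ioo_mem_nhdsGT hab
  have hneg : 0 ≤ y' a := by
    have hs := (hasDerivAt_iff_tendsto_slope.1 (h.hy a)).mono_left
      (nhdsWithin_mono a (fun t (ht : a < t) => ht.ne') : 𝓝[>] a ≤ 𝓝[≠] a)
    refine ge_of_tendsto hs ?_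
    filter_upwards [hev] with t ht
    rw [slope_def_field, h0]
    exact div_nonneg (by linarith [hpos t ht]) (by linarith [ht.1])
  have hlt : 0 < y' a := lt_of_le_of_ne hneg h1.symm
  have hden : Tendsto (fun t => √(exp t ^ 2 - ν ^ 2) * y t) (𝓝[>] a) (𝓝[>] 0) := by
    apply tendsto_nhdsWithin_of_tendsto_nhds_of_eventually_within
    · have : Continuous (fun t => √(exp t ^ 2 - ν ^ 2) * y t) := by
        have := h.cont
        fun_prop
      have h2 := this.tendsto a
      simp only [h0, mul_zero] at h2
      exact h2.mono_left nhdsWithin_le_nhds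
    · have : ∀ᶠ t in 𝓝[>] a, ν < exp t :=
        (Real.continuous_exp.tendsto a).mono_left nhdsWithin_le_nhds |>.eventually_const_lt ha
      filter_upwards [hev, this] with t ht ht2
      exact mul_pos (bp_pos hν ht2) (hpos t ht)
  have := Tendsto.pos_mul_atTop hlt ((h.cont'.tendsto a).mono_left nhdsWithin_le_nhds)
    (tendsto_inv_nhdsGT_zero.comp hden)
  simpa [div_eq_mul_inv] using this

lemma inv_one_add_sq_tendsto {l : Filter ℝ} {z : ℝ → ℝ} (hz : Tendsto (fun t => |z t|) l atTop) :
    Tendsto (fun t => 1 / (1 + z t ^ 2)) l (𝓝 0) := by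
  have h2 : Tendsto (fun t => 1 + z t ^ 2) l atTop := by
    apply tendsto_atTop_add_const_left
    have := (tendsto_pow_atTop (α := ℝ) (n := 2) (by norm_num)).comp hz
    simpa [Function.comp_def] using this
  simp only [one_div]
  exact h2.inv_tendsto_atTop

lemma bF_right {ν : ℝ} {y y' : ℝ → ℝ} (h : BSol ν y y') (hν : 0 < ν) {a b : ℝ} (hab : a < b)
    (hb : ν < exp b) (hpos : ∀ t ∈ Ioo a b, 0 < y t) (h0 : y b = 0) (h1 : y' b ≠ 0) :
    Tendsto (bF ν y y') (𝓝[<] b) (𝓝 (π - bPhi ν b + bR ν b)) := by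
  have hz := h.z_right hν hab hb hpos h0 h1
  have e1 := (tendsto_arctan_atBot.comp hz).mono_right nhdsWithin_le_nhds
  have e2 := ((bPhi_deriv hν hb).continuousAt.tendsto).mono_left (nhdsWithin_le_nhds (s := Iio b))
  have e3 := ((bR_deriv hν hb).continuousAt.tendsto).mono_left (nhdsWithin_le_nhds (s := Iio b))
  have e4 := inv_one_add_sq_tendsto (tendsto_abs_atBot_atTop.comp hz)
  have := ((e1.const_sub (π / 2)).sub e2).add (e3.mul (e4.const_sub 1))
  rw [show π - bPhi ν b + bR ν b = π / 2 - -(π / 2) - bPhi ν b + bR ν b * (1 - 0) by ring]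
  exact this

lemma bF_left {ν : ℝ} {y y' : ℝ → ℝ} (h : BSol ν y y') (hν : 0 < ν) {a b : ℝ} (hab : a < b)
    (ha : ν < exp a) (hpos : ∀ t ∈ Ioo a b, 0 < y t) (h0 : y a = 0) (h1 : y' a ≠ 0) :
    Tendsto (bF ν y y') (𝓝[>] a) (𝓝 (- bPhi ν a + bR ν a)) := by
  have hz := h.z_left hν hab ha hpos h0 h1
  have e1 := (tendsto_arctan_atTop.comp hz).mono_right nhdsWithin_le_nhds
  have e2 := ((bPhi_deriv hν ha).continuousAt.tendsto).mono_left (nhdsWithin_le_nhds (s := Ioi a))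
  have e3 := ((bR_deriv hν ha).continuousAt.tendsto).mono_left (nhdsWithin_le_nhds (s := Ioi a))
  have e4 := inv_one_add_sq_tendsto (tendsto_abs_atTop_atTop.comp hz)
  have := ((e1.const_sub (π / 2)).sub e2).add (e3.mul (e4.const_sub 1))
  rw [show -bPhi ν a + bR ν a = π / 2 - π / 2 - bPhi ν a + bR ν a * (1 - 0) by ring]
  exact this

lemma bG_right {ν : ℝ} {y y' : ℝ → ℝ} (h : BSol ν y y') (hν : 0 < ν) {a b : ℝ} (hab : a < b)
    (hb : ν < exp b) (hpos : ∀ t ∈ Ioo a b, 0 < y t) (h0 : y b = 0) (h1 : y' b ≠ 0) :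
    Tendsto (bG ν y y') (𝓝[<] b) (𝓝 (π - bPhi ν b)) := by
  have hz := h.z_right hν hab hb hpos h0 h1
  have e2 := ((bPhi_deriv hν hb).continuousAt.tendsto).mono_left (nhdsWithin_le_nhds (s := Iio b))
  have e3 := ((bR_deriv hν hb).continuousAt.tendsto).mono_left (nhdsWithin_le_nhds (s := Iio b))
  have e1 := (tendsto_arctan_atBot.comp (hz.atBot_add e3)).mono_right nhdsWithin_le_nhds
  have := ((e1.const_sub (π / 2)).sub e2)
  rw [show π - bPhi ν b = π / 2 - -(π / 2) - bPhi ν b by ring]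
  exact this

lemma bG_left {ν : ℝ} {y y' : ℝ → ℝ} (h : BSol ν y y') (hν : 0 < ν) {a b : ℝ} (hab : a < b)
    (ha : ν < exp a) (hpos : ∀ t ∈ Ioo a b, 0 < y t) (h0 : y a = 0) (h1 : y' a ≠ 0) :
    Tendsto (bG ν y y') (𝓝[>] a) (𝓝 (- bPhi ν a)) := by
  have hz := h.z_left hν hab ha hpos h0 h1
  have e2 := ((bPhi_deriv hν ha).continuousAt.tendsto).mono_left (nhdsWithin_le_nhds (s := Ioi a))
  have e3 := ((bR_deriv hν ha).continuousAt.tendsto).mono_left (nhdsWithin_le_nhds (s := Ioi a))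
  have e1 := (tendsto_arctan_atTop.comp (hz.atTop_add e3)).mono_right nhdsWithin_le_nhds
  have := ((e1.const_sub (π / 2)).sub e2)
  rw [show -bPhi ν a = π / 2 - π / 2 - bPhi ν a by ring]
  exact this

lemma bF_anti {ν : ℝ} {y y' : ℝ → ℝ} (h : BSol ν y y') (hν : 0 < ν) {a b : ℝ}
    (ha : ν ≤ exp a) (hpos : ∀ t ∈ Ioo a b, 0 < y t) : AntitoneOn (bF ν y y') (Ioo a b) := by
  have hd : ∀ t ∈ Ioo a b, ∃ d ≤ 0, HasDerivAt (bF ν y y') d t := fun t ht =>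
    bF_deriv hν (ha.trans_lt (Real.exp_lt_exp.2 ht.1)) (h.hy t) (h.hy' t) (hpos t ht).ne'
  apply antitoneOn_of_deriv_nonpos (convex_Ioo a b)
  · intro t ht
    obtain ⟨d, -, h2⟩ := hd t ht
    exact h2.continuousAt.continuousWithinAt
  · rw [interior_Ioo]
    intro t ht
    obtain ⟨d, -, h2⟩ := hd t ht
    exact h2.differentiableAt.differentiableWithinAt
  · rw [interior_Ioo]
    intro t ht
    obtain ⟨d, h1, h2⟩ := hd t ht
    rw [h2.deriv]; exact h1

lemma bG_mono {ν : ℝ} {y y' : ℝ → ℝ} (h : BSol ν y y') (hν : 0 < ν) {a b : ℝ}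
    (ha : ν ≤ exp a) (hpos : ∀ t ∈ Ioo a b, 0 < y t) : MonotoneOn (bG ν y y') (Ioo a b) := by
  have hd : ∀ t ∈ Ioo a b, ∃ d ≥ 0, HasDerivAt (bG ν y y') d t := fun t ht =>
    bG_deriv hν (ha.trans_lt (Real.exp_lt_exp.2 ht.1)) (h.hy t) (h.hy' t) (hpos t ht).ne'
  apply monotoneOn_of_deriv_nonneg (convex_Ioo a b)
  · intro t ht
    obtain ⟨d, -, h2⟩ := hd t ht
    exact h2.continuousAt.continuousWithinAt
  · rw [interior_Ioo]
    intro t ht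
    obtain ⟨d, -, h2⟩ := hd t ht
    exact h2.differentiableAt.differentiableWithinAt
  · rw [interior_Ioo]
    intro t ht
    obtain ⟨d, h1, h2⟩ := hd t ht
    rw [h2.deriv]; exact h1

lemma bF_ge {ν : ℝ} {y y' : ℝ → ℝ} (h : BSol ν y y') (hν : 0 < ν) {a b : ℝ}
    (ha : ν ≤ exp a) (hpos : ∀ t ∈ Ioo a b, 0 < y t) (h0 : y b = 0) (h1 : y' b ≠ 0)
    {t : ℝ} (ht : t ∈ Ioo a b) : π - bPhi ν b + bR ν b ≤ bF ν y y' t := by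
  have hab := ht.1.trans ht.2
  refine le_of_tendsto (bF_right h hν hab (ha.trans_lt (Real.exp_lt_exp.2 hab)) hpos h0 h1) ?_
  filter_upwards [Ioo_mem_nhdsLT ht.2] with s hs
  exact bF_anti h hν ha hpos ht ⟨ht.1.trans hs.1, hs.2⟩ hs.1.le

lemma bG_le {ν : ℝ} {y y' : ℝ → ℝ} (h : BSol ν y y') (hν : 0 < ν) {a b : ℝ}
    (ha : ν ≤ exp a) (hpos : ∀ t ∈ Ioo a b, 0 < y t) (h0 : y b = 0) (h1 : y' b ≠ 0)
    {t : ℝ} (ht : t ∈ Ioo a b) : bG ν y y' t ≤ π - bPhi ν b := by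
  have hab := ht.1.trans ht.2
  refine ge_of_tendsto (bG_right h hν hab (ha.trans_lt (Real.exp_lt_exp.2 hab)) hpos h0 h1) ?_
  filter_upwards [Ioo_mem_nhdsLT ht.2] with s hs
  exact bG_mono h hν ha hpos ht ⟨ht.1.trans hs.1, hs.2⟩ hs.1.le

lemma gap_pos {ν : ℝ} {y y' : ℝ → ℝ} (h : BSol ν y y') (hν : 0 < ν) {a b : ℝ} (hab : a < b)
    (ha : ν < exp a) (hpos : ∀ t ∈ Ioo a b, 0 < y t) (h0 : y b = 0) (h1 : y' b ≠ 0)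
    (h0a : y a = 0) (h1a : y' a ≠ 0) :
    π + bR ν b - bR ν a ≤ bPhi ν b - bPhi ν a ∧ bPhi ν b - bPhi ν a ≤ π := by
  constructor
  · have : π - bPhi ν b + bR ν b ≤ - bPhi ν a + bR ν a := by
      refine ge_of_tendsto (bF_left h hν hab ha hpos h0a h1a) ?_
      filter_upwards [Ioo_mem_nhdsGT hab] with s hs
      exact bF_ge h hν ha.le hpos h0 h1 hs
    linarith
  · have : - bPhi ν a ≤ π - bPhi ν b := by
      refine le_of_tendsto (bG_left h hν hab ha hpos h0a h1a) ?_
      filter_upwards [Ioo_mem_nhdsGT hab] with s hs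
      exact bG_le h hν ha.le hpos h0 h1 hs
    linarith

lemma sign_const {y : ℝ → ℝ} (hc : Continuous y) {s : Set ℝ} (hs : s.OrdConnected) (h : ∀ t ∈ s, y t ≠ 0) :
    (∀ t ∈ s, 0 < y t) ∨ (∀ t ∈ s, 0 < - y t) := by
  by_contra hcon
  push Not at hcon
  obtain ⟨⟨t1, ht1, h1⟩, t2, ht2, h2⟩ := hcon
  obtain ⟨t, ht, h0⟩ := intermediate_value_uIcc (a := t1) (b := t2) hc.continuousOn
    (show (0:ℝ) ∈ uIcc (y t1) (y t2) from by
      rw [mem_uIcc]; left; constructor <;> linarith)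
  exact h t (hs.uIcc_subset ht1 ht2 ht) h0

lemma gap {ν : ℝ} {y y' : ℝ → ℝ} (h : BSol ν y y') (hν : 0 < ν) (hnt : ∃ t, y t ≠ 0) {a b : ℝ} (hab : a < b)
    (ha : ν < exp a) (hne : ∀ t ∈ Ioo a b, y t ≠ 0) (h0 : y b = 0) (h0a : y a = 0) :
    π + bR ν b - bR ν a ≤ bPhi ν b - bPhi ν a ∧ bPhi ν b - bPhi ν a ≤ π := by
  obtain ⟨t0, ht0⟩ := hnt
  have h1 : y' b ≠ 0 := fun h' => ht0 (h.uniq h0 h' t0)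
  have h1a : y' a ≠ 0 := fun h' => ht0 (h.uniq h0a h' t0)
  rcases sign_const h.cont ordConnected_Ioo hne with hp | hp
  · exact gap_pos h hν hab ha hp h0 h1 h0a h1a
  · exact gap_pos h.neg hν hab ha hp (by simpa using h0) (by simpa using h1) (by simpa using h0a) (by simpa using h1a)


lemma BSol.H_nonneg {ν M : ℝ} {y y' : ℝ → ℝ} (h : BSol ν y y') (hν : 0 < ν)
    (hM : ∀ t, |y t| ≤ M) {t : ℝ} (ht : t ≤ log ν) : 0 ≤ y t * y' t := by
  have hH : ∀ t, HasDerivAt (fun t => y t * y' t) (y' t ^ 2 + (ν ^ 2 - exp t ^ 2) * y t ^ 2) t := fun t =>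
    ((h.hy t).fun_mul (h.hy' t)).congr_deriv (by ring)
  have hmono : MonotoneOn (fun t => y t * y' t) (Iic (log ν)) := by
    apply monotoneOn_of_deriv_nonneg (convex_Iic _)
      (fun t _ => (hH t).continuousAt.continuousWithinAt)
      (fun t _ => (hH t).differentiableAt.differentiableWithinAt)
    intro t ht
    rw [interior_Iic] at ht
    rw [(hH t).deriv]
    have : exp t < ν := (Real.lt_log_iff_exp_lt hν).1 ht
    have h2 := Real.exp_pos t
    have : 0 ≤ ν ^ 2 - exp t ^ 2 := by nlinarith
    positivity
  by_contra hcon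
  push Not at hcon
  set c := y t * y' t with hc
  have hQ : ∀ s, HasDerivAt (fun s => y s ^ 2 - 2 * c * s) (2 * (y s * y' s) - 2 * c) s := fun s =>
    (((h.hy s).fun_pow 2).fun_sub ((hasDerivAt_id s).const_mul (2 * c))).congr_deriv (by push_cast; ring)
  have hanti : AntitoneOn (fun s => y s ^ 2 - 2 * c * s) (Iic t) := by
    apply antitoneOn_of_deriv_nonpos (convex_Iic _)
      (fun t _ => (hQ t).continuousAt.continuousWithinAt)
      (fun t _ => (hQ t).differentiableAt.differentiableWithinAt)
    intro s hs
    rw [interior_Iic] at hs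
    rw [(hQ s).deriv]
    have := hmono (mem_Iic.2 (hs.le.trans ht)) (mem_Iic.2 ht) (le_of_lt hs)
    simp only at this
    linarith
  set s := t + (M ^ 2 + 1) / (2 * c) with hs
  have hst : s ≤ t := by
    have : (M ^ 2 + 1) / (2 * c) ≤ 0 := div_nonpos_of_nonneg_of_nonpos (by positivity) (by linarith)
    linarith
  have h1 := hanti (mem_Iic.2 hst) (mem_Iic.2 le_rfl) hst
  simp only at h1
  have h2 : 2 * c * s = 2 * c * t + (M ^ 2 + 1) := by
    have hc0 : c ≠ 0 := hcon.ne
    rw [hs]; field_simp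
  have h3 : y s ^ 2 ≤ M ^ 2 := by
    rw [← sq_abs]; exact pow_le_pow_left₀ (abs_nonneg _) (hM s) 2
  nlinarith [sq_nonneg (y t)]

lemma BSol.no_zero {ν M : ℝ} {y y' : ℝ → ℝ} (h : BSol ν y y') (hν : 0 < ν) (hnt : ∃ t, y t ≠ 0)
    (hM : ∀ t, |y t| ≤ M) {t : ℝ} (ht : t ≤ log ν) : y t ≠ 0 := by
  intro h0
  have hQ : ∀ s, HasDerivAt (fun s => y s ^ 2) (2 * (y s * y' s)) s := fun s =>
    ((h.hy s).fun_pow 2).congr_deriv (by push_cast; ring)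
  have hmono : MonotoneOn (fun s => y s ^ 2) (Iic (log ν)) := by
    apply monotoneOn_of_deriv_nonneg (convex_Iic _)
      (fun t _ => (hQ t).continuousAt.continuousWithinAt)
      (fun t _ => (hQ t).differentiableAt.differentiableWithinAt)
    intro s hs
    rw [interior_Iic] at hs
    rw [(hQ s).deriv]
    have := h.H_nonneg hν hM (le_of_lt hs)
    linarith
  have hz : ∀ s ≤ t, y s = 0 := by
    intro s hs
    have := hmono (mem_Iic.2 (hs.trans ht)) (mem_Iic.2 ht) hs
    simp only [h0] at this
    have : y s ^ 2 = 0 := by nlinarith [sq_nonneg (y s)]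
    simpa using this
  have hd : y' (t - 1) = 0 := by
    have h1 : y =ᶠ[𝓝 (t - 1)] fun _ => 0 := by
      filter_upwards [Iio_mem_nhds (show t - 1 < t by linarith)] with s hs
      exact hz s (le_of_lt hs)
    have h2 := (hasDerivAt_const (t - 1) (0:ℝ)).congr_of_eventuallyEq h1
    exact (h.hy _).unique h2
  obtain ⟨t0, ht0⟩ := hnt
  exact ht0 (h.uniq (hz (t-1) (by linarith)) hd t0)

lemma BSol.H_pos {ν M : ℝ} {y y' : ℝ → ℝ} (h : BSol ν y y') (hν : 0 < ν) (hnt : ∃ t, y t ≠ 0)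
    (hM : ∀ t, |y t| ≤ M) : 0 < y (log ν) * y' (log ν) := by
  have hH : ∀ t, HasDerivAt (fun t => y t * y' t) (y' t ^ 2 + (ν ^ 2 - exp t ^ 2) * y t ^ 2) t := fun t =>
    ((h.hy t).fun_mul (h.hy' t)).congr_deriv (by ring)
  have hmono : StrictMonoOn (fun t => y t * y' t) (Iic (log ν)) := by
    apply strictMonoOn_of_deriv_pos (convex_Iic _)
      (fun t _ => (hH t).continuousAt.continuousWithinAt)
    intro t ht
    rw [interior_Iic] at ht
    rw [(hH t).deriv]
    have : exp t < ν := (Real.lt_log_iff_exp_lt hν).1 ht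
    have h2 := Real.exp_pos t
    have : 0 < ν ^ 2 - exp t ^ 2 := by nlinarith
    have := h.no_zero hν hnt hM (le_of_lt ht)
    positivity
  have h1 := hmono (mem_Iic.2 (show log ν - 1 ≤ log ν by linarith)) (mem_Iic.2 le_rfl) (by linarith)
  have h2 := h.H_nonneg hν hM (show log ν - 1 ≤ log ν by linarith)
  exact lt_of_le_of_lt h2 h1

lemma bPhi_cont (ν : ℝ) : Continuous (bPhi ν) := by
  unfold bPhi
  have : Continuous fun t => ν / exp t := continuous_const.div Real.continuous_exp (fun t => (Real.exp_pos t).ne')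
  have h2 : Continuous fun t => arccos (ν / exp t) := Real.continuous_arccos.comp this
  fun_prop

lemma bPhi_log {ν : ℝ} (hν : 0 < ν) : bPhi ν (log ν) = 0 := by
  simp [bPhi, Real.exp_log hν, hν.ne']

lemma bPhi_nonneg {ν t : ℝ} (hν : 0 < ν) (ht : log ν ≤ t) : 0 ≤ bPhi ν t := by
  have hlt : ∀ s ∈ Ioi (log ν), ν < exp s := fun s hs => (Real.log_lt_iff_lt_exp hν).1 hs
  have : MonotoneOn (bPhi ν) (Ici (log ν)) := by
    apply monotoneOn_of_deriv_nonneg (convex_Ici _) (bPhi_cont ν).continuousOn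
    · rw [interior_Ici]
      exact fun t ht => (bPhi_deriv hν (hlt t ht)).differentiableAt.differentiableWithinAt
    · rw [interior_Ici]
      intro t ht
      rw [(bPhi_deriv hν (hlt t ht)).deriv]; positivity
  have := this (mem_Ici.2 le_rfl) (mem_Ici.2 ht) ht
  rwa [bPhi_log hν] at this

lemma first_pos {ν M : ℝ} {y y' : ℝ → ℝ} (h : BSol ν y y') (hν : 0 < ν) (hnt : ∃ t, y t ≠ 0)
    (hM : ∀ t, |y t| ≤ M) {b : ℝ} (hpos : ∀ t ∈ Iio b, 0 < y t) (h0 : y b = 0) :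
    π / 2 + bR ν b ≤ bPhi ν b ∧ bPhi ν b ≤ π := by
  have hb : log ν < b := by
    by_contra hcon
    exact h.no_zero hν hnt hM (not_lt.1 hcon) h0
  have h1 : y' b ≠ 0 := fun h' => by
    obtain ⟨t0, ht0⟩ := hnt
    exact ht0 (h.uniq h0 h' t0)
  have hτ : ν ≤ exp (log ν) := (Real.exp_log hν).ge
  have hpos' : ∀ t ∈ Ioo (log ν) b, 0 < y t := fun t ht => hpos t ht.2
  have hy0 := hpos (log ν) hb
  have hy0' : 0 < y' (log ν) := by
    have := h.H_pos hν hnt hM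
    exact (mul_pos_iff_of_pos_left hy0).1 this
  constructor
  · obtain ⟨c, hc, hc'⟩ := exists_hasDerivAt_eq_slope y y' hb h.cont.continuousOn (fun t _ => h.hy t)
    have hcneg : y' c < 0 := by
      rw [hc', h0]; exact div_neg_of_neg_of_pos (by linarith) (by linarith)
    obtain ⟨t', ht', hz⟩ := intermediate_value_Icc' hc.1.le h.cont'.continuousOn
      (show (0:ℝ) ∈ Icc (y' c) (y' (log ν)) from ⟨hcneg.le, hy0'.le⟩)
    have hne : t' ≠ log ν := by rintro rfl; linarith
    have ht1 : log ν < t' := lt_of_le_of_ne ht'.1 hne.symm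
    have h2 := bF_ge h hν hτ hpos' h0 h1 ⟨ht1, ht'.2.trans_lt hc.2⟩
    simp [bF, hz] at h2
    have := bPhi_nonneg hν ht1.le
    linarith
  · have : ∀ t ∈ Ioo (log ν) b, bPhi ν b - π ≤ bPhi ν t := by
      intro t ht
      have h2 := bG_le h hν hτ hpos' h0 h1 ht
      unfold bG at h2
      have := Real.arctan_lt_pi_div_two (y' t / (√(rexp t ^ 2 - ν ^ 2) * y t) + bR ν t)
      linarith
    have h3 : Tendsto (bPhi ν) (𝓝[>] (log ν)) (𝓝 0) := by
      have := (bPhi_cont ν).tendsto (log ν)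
      rw [bPhi_log hν] at this
      exact this.mono_left nhdsWithin_le_nhds
    have : bPhi ν b - π ≤ 0 := by
      refine ge_of_tendsto h3 ?_
      filter_upwards [Ioo_mem_nhdsGT hb] with s hs using this s hs
    linarith

lemma first {ν M : ℝ} {y y' : ℝ → ℝ} (h : BSol ν y y') (hν : 0 < ν) (hnt : ∃ t, y t ≠ 0)
    (hM : ∀ t, |y t| ≤ M) {b : ℝ} (hne : ∀ t ∈ Iio b, y t ≠ 0) (h0 : y b = 0) :
    π / 2 + bR ν b ≤ bPhi ν b ∧ bPhi ν b ≤ π := by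
  rcases sign_const h.cont ordConnected_Iio hne with hp | hp
  · exact first_pos h hν hnt hM hp h0
  · obtain ⟨t, ht⟩ := hnt
    exact first_pos h.neg hν ⟨t, by simpa using ht⟩ (M := M) (by simpa using hM) hp (by simpa using h0)

lemma zeros_finite {ν M : ℝ} {y y' : ℝ → ℝ} (h : BSol ν y y') (hν : 0 < ν) (hnt : ∃ t, y t ≠ 0)
    (hM : ∀ t, |y t| ≤ M) (b : ℝ) : {t | t < b ∧ y t = 0}.Finite := by
  by_contra hinf
  have hsub : {t | t < b ∧ y t = 0} ⊆ Icc (log ν) b := by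
    rintro t ⟨ht, h0⟩
    refine ⟨?_, ht.le⟩
    by_contra hcon
    exact h.no_zero hν hnt hM (not_le.1 hcon).le h0
  obtain ⟨z, -, hz⟩ := Set.Infinite.exists_accPt_of_subset_isCompact hinf isCompact_Icc hsub
  rw [accPt_iff_frequently_nhdsNE] at hz
  have hz0 : y z = 0 := by
    by_contra hne
    have : ∀ᶠ t in 𝓝[≠] z, y t ≠ 0 :=
      ((h.cont.tendsto z).mono_left nhdsWithin_le_nhds).eventually_ne hne
    obtain ⟨t, ht1, ht2⟩ := (hz.and_eventually this).exists
    exact ht2 ht1.2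
  have hz1 : y' z = 0 := by
    by_contra hne
    have := (h.hy z).eventually_ne (c := 0) hne
    obtain ⟨t, ht1, ht2⟩ := (hz.and_eventually this).exists
    exact ht2 ht1.2
  obtain ⟨t, ht⟩ := hnt
  exact ht (h.uniq hz0 hz1 t)

lemma pred_zero {ν M : ℝ} {y y' : ℝ → ℝ} (h : BSol ν y y') (hν : 0 < ν) (hnt : ∃ t, y t ≠ 0)
    (hM : ∀ t, |y t| ≤ M) {b : ℝ} {n : ℕ} (hn : {t | t < b ∧ y t = 0}.ncard = n + 1) :
    ∃ c, c < b ∧ y c = 0 ∧ {t | t < c ∧ y t = 0}.ncard = n ∧ (∀ t ∈ Ioo c b, y t ≠ 0) := by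
  have hfin := zeros_finite h hν hnt hM b
  have hne : {t | t < b ∧ y t = 0}.Nonempty := by
    apply Set.nonempty_of_ncard_ne_zero; omega
  obtain ⟨c, hc, hmax⟩ := hfin.exists_maximalFor id _ hne
  have hmax' : ∀ t, t < b → y t = 0 → t ≤ c := by
    intro t ht h0
    by_contra hlt
    have := hmax (j := t) ⟨ht, h0⟩ (not_le.1 hlt).le
    exact hlt this
  refine ⟨c, hc.1, hc.2, ?_, fun t ht h0 => absurd (hmax' t ht.2 h0) (not_le.2 ht.1)⟩
  have : {t | t < b ∧ y t = 0} = insert c {t | t < c ∧ y t = 0} := by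
    ext t
    simp only [mem_ofPred_eq, mem_insert_iff]
    constructor
    · rintro ⟨h1, h2⟩
      rcases (hmax' t h1 h2).eq_or_lt with h3 | h3
      · exact Or.inl h3
      · exact Or.inr ⟨h3, h2⟩
    · rintro (rfl | ⟨h1, h2⟩)
      · exact hc
      · exact ⟨h1.trans hc.1, h2⟩
  rw [this, Set.ncard_insert_of_notMem (by simp) (zeros_finite h hν hnt hM c)] at hn
  omega

lemma index_bound {ν M : ℝ} {y y' : ℝ → ℝ} (h : BSol ν y y') (hν : 0 < ν) (hnt : ∃ t, y t ≠ 0)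
    (hM : ∀ t, |y t| ≤ M) (n : ℕ) : ∀ b : ℝ, y b = 0 → {t | t < b ∧ y t = 0}.ncard = n →
    n * π + π / 2 + bR ν b ≤ bPhi ν b ∧ bPhi ν b ≤ (n + 1) * π := by
  induction n with
  | zero =>
    intro b h0 hn
    rw [Set.ncard_eq_zero (zeros_finite h hν hnt hM b)] at hn
    have := first h hν hnt hM (b := b) (fun t ht h1 => by
      have : t ∈ {t | t < b ∧ y t = 0} := ⟨ht, h1⟩
      rw [hn] at this; exact this) h0
    constructor
    · push_cast; linarith [this.1]
    · push_cast; linarith [this.2]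
  | succ n ih =>
    intro b h0 hn
    obtain ⟨c, hc, hc0, hcn, hcb⟩ := pred_zero h hν hnt hM hn
    have hlc : ν < exp c := by
      by_contra hcon
      exact h.no_zero hν hnt hM ((Real.le_log_iff_exp_le hν).2 (not_lt.1 hcon)) hc0
    have h1 := ih c hc0 hcn
    have h2 := gap h hν hnt hc hlc hcb h0 hc0
    push_cast
    constructor <;> nlinarith [h1.1, h1.2, h2.1, h2.2]

lemma pair_bound {ν M : ℝ} {y y' : ℝ → ℝ} (h : BSol ν y y') (hν : 0 < ν) (hnt : ∃ t, y t ≠ 0)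
    (hM : ∀ t, |y t| ≤ M) {a : ℝ} (ha : y a = 0) (n : ℕ) : ∀ b : ℝ, y b = 0 → a ≤ b →
    {t | t < b ∧ y t = 0}.ncard = n →
    (n - ({t | t < a ∧ y t = 0}.ncard : ℝ)) * π + bR ν b - bR ν a ≤ bPhi ν b - bPhi ν a ∧
      bPhi ν b - bPhi ν a ≤ (n - ({t | t < a ∧ y t = 0}.ncard : ℝ)) * π := by
  induction n with
  | zero =>
    intro b h0 hab hn
    rcases hab.eq_or_lt with rfl | hab
    · rw [hn]; simp
    · exfalso
      rw [Set.ncard_eq_zero (zeros_finite h hν hnt hM b)] at hn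
      have : a ∈ {t | t < b ∧ y t = 0} := ⟨hab, ha⟩
      rw [hn] at this; exact this
  | succ n ih =>
    intro b h0 hab hn
    rcases hab.eq_or_lt with rfl | hab
    · rw [hn]; simp
    obtain ⟨c, hc, hc0, hcn, hcb⟩ := pred_zero h hν hnt hM hn
    have hlc : ν < exp c := by
      by_contra hcon
      exact h.no_zero hν hnt hM ((Real.le_log_iff_exp_le hν).2 (not_lt.1 hcon)) hc0
    have hac : a ≤ c := by
      by_contra hcon
      exact hcb a ⟨not_le.1 hcon, hab⟩ ha
    have h1 := ih c hc0 hac hcn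
    have h2 := gap h hν hnt hc hlc hcb h0 hc0
    push_cast
    constructor <;> nlinarith [h1.1, h1.2, h2.1, h2.2]

lemma bPhi_asym {ν : ℝ} (hν : 0 < ν) :
    Tendsto (fun t => exp t - ν * π / 2 - bPhi ν t) atTop (𝓝 0) := by
  have h1 : Tendsto (fun t => ν / exp t) atTop (𝓝 0) := tendsto_const_nhds.div_atTop Real.tendsto_exp_atTop
  have h2 : Tendsto (fun t => arccos (ν / exp t)) atTop (𝓝 (π / 2)) := by
    have := (Real.continuous_arccos.tendsto 0).comp h1
    rwa [Real.arccos_zero] at this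
  have h3 : Tendsto (fun t => exp t - √(exp t ^ 2 - ν ^ 2)) atTop (𝓝 0) := by
    have h4 : Tendsto (fun t => ν * (ν / exp t)) atTop (𝓝 0) := by simpa using h1.const_mul ν
    refine squeeze_zero' ?_ ?_ h4
    · filter_upwards with t
      have := Real.sqrt_le_sqrt (show exp t ^ 2 - ν ^ 2 ≤ exp t ^ 2 by nlinarith)
      rw [Real.sqrt_sq (Real.exp_pos t).le] at this
      linarith
    · filter_upwards [eventually_ge_atTop (log ν)] with t ht
      have hx := Real.exp_pos t
      have : ν ≤ exp t := (Real.log_le_iff_le_exp hν).1 ht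
      have : exp t - ν * (ν / exp t) ≤ √(exp t ^ 2 - ν ^ 2) := by
        apply Real.le_sqrt_of_sq_le
        have h5 : exp t * (ν / exp t) = ν := by field_simp
        have h6 : ν / exp t ≤ 1 := (div_le_one hx).2 this
        have h7 : 0 < ν / exp t := by positivity
        set q := ν / exp t
        have : (ν * q) ^ 2 ≤ ν ^ 2 := by
          have : (ν * q) ≤ ν := by nlinarith
          have : 0 ≤ ν * q := by positivity
          nlinarith
        nlinarith
      linarith
  have := h3.add ((h2.sub_const (π / 2)).const_mul ν)
  simp only [sub_self, mul_zero, add_zero] at this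
  refine this.congr fun t => ?_
  unfold bPhi; ring

lemma large_zero {ν A : ℝ} {y : ℝ → ℝ} (hc : Continuous y) (hν : 0 < ν) (hA : A ≠ 0)
    (has : Tendsto (fun t => exp (t / 2) * y t - A * cos (exp t - ν * π / 2 - π / 4)) atTop (𝓝 0)) (T : ℝ) :
    ∃ b ≥ T, y b = 0 := by
  have hx : ∀ m : ℕ, 0 < ν * π / 2 + π / 4 + m * π := fun m => by positivity
  set τ : ℕ → ℝ := fun m => log (ν * π / 2 + π / 4 + m * π) with hτ
  have htend : Tendsto τ atTop atTop := by
    apply Real.tendsto_log_atTop.comp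
    apply tendsto_atTop_add_const_left
    exact tendsto_natCast_atTop_atTop.atTop_mul_const Real.pi_pos
  have hev : ∀ᶠ m in atTop, T ≤ τ m ∧ |exp (τ m / 2) * y (τ m) - A * cos (exp (τ m) - ν * π / 2 - π / 4)| < |A| := by
    have := has.abs.eventually_lt_const (show |(0:ℝ)| < |A| by simpa using hA)
    exact htend.eventually ((eventually_ge_atTop T).and this)
  have hcos : ∀ m, cos (exp (τ m) - ν * π / 2 - π / 4) = (-1) ^ m := by
    intro m
    rw [hτ]; simp only
    rw [Real.exp_log (hx m), show ν * π / 2 + π / 4 + m * π - ν * π / 2 - π / 4 = m * π by ring, Real.cos_nat_mul_pi]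
  have key : ∀ m, |exp (τ m / 2) * y (τ m) - A * (-1) ^ m| < |A| → 0 < A * (-1) ^ m * y (τ m) := by
    intro m hm
    have h2 := Real.exp_pos (τ m / 2)
    have habs : |A| = |A * (-1) ^ m| := by simp [abs_mul]
    rw [habs] at hm
    set B := A * (-1) ^ m
    have hB : B ≠ 0 := mul_ne_zero hA (by simp)
    rw [← sq_lt_sq] at hm
    have h3 : 0 < exp (τ m / 2) * (B * y (τ m)) := by
      nlinarith [sq_nonneg (exp (τ m / 2) * y (τ m))]
    exact (mul_pos_iff_of_pos_left h2).1 h3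
  obtain ⟨m, hm⟩ := (hev.and ((tendsto_add_atTop_nat 1).eventually hev)).exists
  simp only [hcos] at hm
  have k1 := key m hm.1.2
  have k2 := key (m+1) hm.2.2
  have : ¬ (∀ t ∈ Ici T, y t ≠ 0) := by
    intro hne
    rw [pow_succ] at k2
    have e : A * ((-1) ^ m * -1) * y (τ (m+1)) = - (A * (-1)^m * y (τ (m+1))) := by ring
    rw [e] at k2
    rcases sign_const hc ordConnected_Ici hne with hp | hp
    · have p1 := hp _ hm.1.1
      have p2 := hp _ hm.2.1
      rw [mul_pos_iff_of_pos_right p1] at k1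
      nlinarith
    · have p1 := hp _ hm.1.1
      have p2 := hp _ hm.2.1
      have : 0 < A * (-1)^m * (-y (τ (m+1))) := by linarith
      rw [mul_pos_iff_of_pos_right p2] at this
      nlinarith
  push Not at this
  obtain ⟨b, hb, h0⟩ := this
  exact ⟨b, hb, h0⟩

theorem zero_phase {ν M A : ℝ} {y y' : ℝ → ℝ} (h : BSol ν y y') (hν : 0 < ν)
    (hM : ∀ t, |y t| ≤ M) (hA : A ≠ 0)
    (has : Tendsto (fun t => exp (t / 2) * y t - A * cos (exp t - ν * π / 2 - π / 4)) atTop (𝓝 0))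
    {a : ℝ} (ha : y a = 0) (n : ℕ) (hn : {t | t < a ∧ y t = 0}.ncard = n) (hnt : ∃ t, y t ≠ 0) :
    (n + 1 - 1 / 4) * π ≤ bPhi ν a ∧ bPhi ν a ≤ (n + 1 - 1 / 4) * π + bR ν a := by
  have main : ∀ ε > 0, |bPhi ν a - (n + 1 - 1 / 4) * π - bR ν a / 2| ≤ bR ν a / 2 + ε := by
    intro ε hε
    have hpi := Real.pi_pos
    set δ := ε / π with hδ
    have hδp : 0 < δ := by positivity
    have e1 := has.abs.eventually_lt_const (show |(0:ℝ)| < |A| * δ by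
      rw [abs_zero]; exact mul_pos (abs_pos.2 hA) hδp)
    have e2 := (bPhi_asym hν).abs.eventually_lt_const (show |(0:ℝ)| < δ by simpa using hδp)
    obtain ⟨T, hT⟩ := eventually_atTop.1 (e1.and e2)
    obtain ⟨b, hb, hb0⟩ := large_zero h.cont hν hA has (max T a)
    obtain ⟨h1, h2⟩ := hT b ((le_max_left _ _).trans hb)
    have hab : a ≤ b := (le_max_right _ _).trans hb
    rw [hb0, mul_zero, zero_sub, abs_neg, abs_mul] at h1
    have h1 := lt_of_mul_lt_mul_left h1 (abs_nonneg A)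
    obtain ⟨i1, i2⟩ := index_bound h hν hnt hM _ b hb0 rfl
    obtain ⟨p1, p2⟩ := pair_bound h hν hnt hM ha _ b hb0 hab rfl
    rw [hn] at p1 p2
    set m := {t | t < b ∧ y t = 0}.ncard
    have hRb : 0 ≤ bR ν b := by unfold bR; positivity
    set ψ := bPhi ν b - (m + 1 : ℕ) * π + π / 4 with hψ
    have hψ' : |ψ| ≤ π / 2 := by
      rw [abs_le, hψ]; push_cast
      constructor <;> nlinarith
    have hs : |sin ψ| ≤ 2 * δ := by
      have c1 : |cos (bPhi ν b - π / 4)| = |sin ψ| := by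
        have : bPhi ν b - π / 4 = (ψ - π / 2) + (m + 1 : ℕ) * π := by rw [hψ]; ring
        rw [this, Real.cos_add_nat_mul_pi, abs_mul, Real.cos_sub_pi_div_two]; simp
      rw [← c1]
      have c2 : |cos (bPhi ν b - π / 4) - cos (exp b - ν * π / 2 - π / 4)| ≤ δ := by
        have := Real.abs_cos_sub_cos_le (bPhi ν b - π / 4) (exp b - ν * π / 2 - π / 4)
        refine this.trans ?_
        rw [abs_sub_comm]
        rw [show exp b - ν * π / 2 - π / 4 - (bPhi ν b - π / 4) = exp b - ν * π / 2 - bPhi ν b by ring]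
        exact h2.le
      have := abs_sub_abs_le_abs_sub (cos (bPhi ν b - π / 4)) (cos (exp b - ν * π / 2 - π / 4))
      linarith
    have h3 := Real.mul_abs_le_abs_sin hψ'
    have h4 : |ψ| ≤ ε := by
      have : 2 / π * |ψ| ≤ 2 / π * ε := by
        calc _ ≤ 2 * δ := h3.trans hs
          _ = _ := by rw [hδ]; ring
      exact le_of_mul_le_mul_left this (by positivity)
    rw [abs_le] at h4 ⊢
    rw [hψ] at h4
    push_cast at h4
    constructor <;> nlinarith [h4.1, h4.2]
  have : |bPhi ν a - (n + 1 - 1 / 4) * π - bR ν a / 2| ≤ bR ν a / 2 :=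
    le_of_forall_pos_le_add main
  rw [abs_le] at this
  constructor <;> linarith [this.1, this.2]


noncomputable def bK (n : ℕ) (ν x : ℝ) : ℝ :=
  ∫ t in Set.Ioi (0:ℝ), (-sinh t) ^ n * exp (-x * sinh t - ν * t)

lemma bK_bound (n : ℕ) {ν x t δ : ℝ} (hδ : 0 < δ) (hx : δ ≤ x) (ht : 0 ≤ t) :
    ‖(-sinh t) ^ n * exp (-x * sinh t - ν * t)‖ ≤ n.factorial / δ ^ n * exp (-ν * t) := by
  have hs : 0 ≤ sinh t := Real.sinh_nonneg_iff.2 ht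
  rw [norm_mul, norm_pow, norm_neg, Real.norm_of_nonneg hs, Real.norm_of_nonneg (Real.exp_pos _).le,
    show -x * sinh t - ν * t = -(x * sinh t) + -ν * t by ring, Real.exp_add, ← mul_assoc]
  apply mul_le_mul_of_nonneg_right _ (Real.exp_pos _).le
  have h1 := Real.pow_div_factorial_le_exp (δ * sinh t) (by positivity) n
  have h2 : exp (δ * sinh t) ≤ exp (x * sinh t) :=
    Real.exp_le_exp.2 (mul_le_mul_of_nonneg_right hx hs)
  rw [Real.exp_neg]
  have h3 := Real.exp_pos (x * sinh t)
  have h4 : (0:ℝ) < n.factorial := by positivity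
  rw [mul_inv_le_iff₀ h3]
  have h5 := h1.trans h2
  rw [mul_pow, div_le_iff₀ h4] at h5
  rw [div_mul_eq_mul_div, le_div_iff₀ (by positivity)]
  linarith

lemma bK_meas (n : ℕ) (ν x : ℝ) (μ : Measure ℝ) :
    AEStronglyMeasurable (fun t => (-sinh t) ^ n * exp (-x * sinh t - ν * t)) μ := by
  apply Continuous.aestronglyMeasurable
  fun_prop

lemma bexp_int (C : ℝ) {ν : ℝ} (hν : 0 < ν) : IntegrableOn (fun t => C * exp (-ν * t)) (Ioi 0) :=
  (exp_neg_integrableOn_Ioi 0 hν).const_mul C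

lemma bK_int (n : ℕ) {ν x : ℝ} (hν : 0 < ν) (hx : 0 < x) :
    IntegrableOn (fun t => (-sinh t) ^ n * exp (-x * sinh t - ν * t)) (Ioi 0) := by
  refine Integrable.mono' (bexp_int (n.factorial / x ^ n) hν) (bK_meas n ν x _) ?_
  filter_upwards [ae_restrict_mem measurableSet_Ioi] with t ht
  exact bK_bound n hx le_rfl (le_of_lt ht)

lemma bK_deriv (n : ℕ) {ν x : ℝ} (hν : 0 < ν) (hx : 0 < x) :
    HasDerivAt (bK n ν) (bK (n + 1) ν x) x := by
  have := hasDerivAt_integral_of_dominated_loc_of_deriv_le (μ := volume.restrict (Ioi (0:ℝ)))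
    (F := fun x t => (-sinh t) ^ n * exp (-x * sinh t - ν * t))
    (F' := fun x t => (-sinh t) ^ (n + 1) * exp (-x * sinh t - ν * t)) (x₀ := x) (s := Ioi (x / 2))
    (bound := fun t => (n + 1).factorial / (x / 2) ^ (n + 1) * exp (-ν * t))
    (Ioi_mem_nhds (by linarith)) (Eventually.of_forall fun x => bK_meas n ν x _)
    (bK_int n hν hx) (bK_meas (n + 1) ν x _) ?_ (bexp_int _ hν) ?_
  · exact this.2
  · filter_upwards [ae_restrict_mem measurableSet_Ioi] with t ht z hz
    exact bK_bound (n + 1) (by linarith) (le_of_lt hz) (le_of_lt ht)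
  · filter_upwards with t z hz
    have h1 : HasDerivAt (fun x => -x * sinh t - ν * t) (-sinh t) z :=
      ((((hasDerivAt_id z).fun_neg).mul_const (sinh t)).sub_const (ν * t)).congr_deriv (by simp)
    exact (h1.exp.const_mul ((-sinh t) ^ n)).congr_deriv (by ring)

noncomputable def bC0 (ν x : ℝ) : ℝ := ∫ θ in (0:ℝ)..π, cos (x * sin θ - ν * θ)
noncomputable def bS1 (ν x : ℝ) : ℝ := ∫ θ in (0:ℝ)..π, -sin θ * sin (x * sin θ - ν * θ)
noncomputable def bC2 (ν x : ℝ) : ℝ := ∫ θ in (0:ℝ)..π, -sin θ ^ 2 * cos (x * sin θ - ν * θ)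

lemma bC0_deriv (ν x : ℝ) : HasDerivAt (bC0 ν) (bS1 ν x) x := by
  have := intervalIntegral.hasDerivAt_integral_of_dominated_loc_of_deriv_le (μ := volume) (a := 0) (b := π)
    (F := fun x θ => cos (x * sin θ - ν * θ)) (F' := fun x θ => -sin θ * sin (x * sin θ - ν * θ)) (x₀ := x)
    (s := univ) (bound := fun _ => 1) univ_mem
    (Eventually.of_forall fun x => (by fun_prop : Continuous _).aestronglyMeasurable)
    ((by fun_prop : Continuous _).intervalIntegrable _ _)
    ((by fun_prop : Continuous _).aestronglyMeasurable) ?_ (by simp) ?_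
  · exact this.2
  · filter_upwards with t ht z hz
    rw [norm_mul, norm_neg]
    have h1 := Real.abs_sin_le_one t
    have h2 := Real.abs_sin_le_one (z * sin t - ν * t)
    simp only [Real.norm_eq_abs]
    nlinarith [abs_nonneg (sin t), abs_nonneg (sin (z * sin t - ν * t))]
  · filter_upwards with t ht z hz
    have h1 : HasDerivAt (fun x => x * sin t - ν * t) (sin t) z :=
      (((hasDerivAt_id z).mul_const (sin t)).sub_const (ν * t)).congr_deriv (by simp)
    exact h1.cos.congr_deriv (by ring)

lemma bS1_deriv (ν x : ℝ) : HasDerivAt (bS1 ν) (bC2 ν x) x := by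
  have := intervalIntegral.hasDerivAt_integral_of_dominated_loc_of_deriv_le (μ := volume) (a := 0) (b := π)
    (F := fun x θ => -sin θ * sin (x * sin θ - ν * θ)) (F' := fun x θ => -sin θ ^ 2 * cos (x * sin θ - ν * θ)) (x₀ := x)
    (s := univ) (bound := fun _ => 1) univ_mem
    (Eventually.of_forall fun x => (by fun_prop : Continuous _).aestronglyMeasurable)
    ((by fun_prop : Continuous _).intervalIntegrable _ _)
    ((by fun_prop : Continuous _).aestronglyMeasurable) ?_ (by simp) ?_
  · exact this.2
  · filter_upwards with t ht z hz
    rw [norm_mul, norm_neg, norm_pow]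
    have h1 := Real.abs_sin_le_one t
    have h2 := Real.abs_cos_le_one (z * sin t - ν * t)
    have h3 : |sin t| ^ 2 ≤ 1 := pow_le_one₀ (abs_nonneg _) h1
    simp only [Real.norm_eq_abs]
    nlinarith [sq_nonneg |sin t|, abs_nonneg (cos (z * sin t - ν * t))]
  · filter_upwards with t ht z hz
    have h1 : HasDerivAt (fun x => x * sin t - ν * t) (sin t) z :=
      (((hasDerivAt_id z).mul_const (sin t)).sub_const (ν * t)).congr_deriv (by simp)
    exact (h1.sin.const_mul (-sin t)).congr_deriv (by ring)

lemma bC_ode (ν x : ℝ) : x ^ 2 * bC2 ν x + x * bS1 ν x + (x ^ 2 - ν ^ 2) * bC0 ν x = (x - ν) * sin (ν * π) := by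
  unfold bC2 bS1 bC0
  rw [← intervalIntegral.integral_const_mul, ← intervalIntegral.integral_const_mul,
    ← intervalIntegral.integral_const_mul, ← intervalIntegral.integral_add
    ((by fun_prop : Continuous _).intervalIntegrable _ _) ((by fun_prop : Continuous _).intervalIntegrable _ _),
    ← intervalIntegral.integral_add
    ((by fun_prop : Continuous _).intervalIntegrable _ _) ((by fun_prop : Continuous _).intervalIntegrable _ _)]
  have hd : ∀ θ ∈ uIcc 0 π, HasDerivAt (fun θ => (x * cos θ + ν) * sin (x * sin θ - ν * θ))
      (x ^ 2 * (-sin θ ^ 2 * cos (x * sin θ - ν * θ)) + x * (-sin θ * sin (x * sin θ - ν * θ)) +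
        (x ^ 2 - ν ^ 2) * cos (x * sin θ - ν * θ)) θ := by
    intro θ _
    have h1 : HasDerivAt (fun θ => x * sin θ - ν * θ) (x * cos θ - ν) θ :=
      (((Real.hasDerivAt_sin θ).const_mul x).fun_sub ((hasDerivAt_id θ).const_mul ν)).congr_deriv (by simp)
    have h2 : HasDerivAt (fun θ => x * cos θ + ν) (x * -sin θ) θ :=
      ((Real.hasDerivAt_cos θ).const_mul x).add_const ν
    refine (h2.fun_mul h1.sin).congr_deriv ?_
    have := Real.sin_sq θ
    rw [this]
    ring
  rw [intervalIntegral.integral_eq_sub_of_hasDerivAt hd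
    ((by fun_prop : Continuous _).intervalIntegrable _ _)]
  simp
  ring

lemma bK_ode {ν x : ℝ} (hν : 0 < ν) (hx : 0 < x) :
    x ^ 2 * bK 2 ν x + x * bK 1 ν x + (x ^ 2 - ν ^ 2) * bK 0 ν x = x - ν := by
  unfold bK
  have i0 := bK_int 0 hν hx
  have i1 := bK_int 1 hν hx
  have i2 := bK_int 2 hν hx
  have i4 : IntegrableOn (fun t => x ^ 2 * ((-sinh t) ^ 2 * exp (-x * sinh t - ν * t)) +
      x * ((-sinh t) ^ 1 * exp (-x * sinh t - ν * t))) (Ioi 0) :=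
    (i2.const_mul (x ^ 2)).add (i1.const_mul x)
  have i3 : IntegrableOn (fun t => x ^ 2 * ((-sinh t) ^ 2 * exp (-x * sinh t - ν * t)) +
      x * ((-sinh t) ^ 1 * exp (-x * sinh t - ν * t)) +
      (x ^ 2 - ν ^ 2) * ((-sinh t) ^ 0 * exp (-x * sinh t - ν * t))) (Ioi 0) :=
    i4.add (i0.const_mul (x ^ 2 - ν ^ 2))
  rw [← integral_const_mul, ← integral_const_mul, ← integral_const_mul,
    ← integral_add (i2.const_mul _) (i1.const_mul _),
    ← integral_add i4 (i0.const_mul _)]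
  have hd : ∀ t ∈ Ici (0:ℝ), HasDerivAt (fun t => (-x * cosh t + ν) * exp (-x * sinh t - ν * t))
      (x ^ 2 * ((-sinh t) ^ 2 * exp (-x * sinh t - ν * t)) + x * ((-sinh t) ^ 1 * exp (-x * sinh t - ν * t)) +
        (x ^ 2 - ν ^ 2) * ((-sinh t) ^ 0 * exp (-x * sinh t - ν * t))) t := by
    intro t _
    have h1 : HasDerivAt (fun t => -x * sinh t - ν * t) (-x * cosh t - ν) t :=
      (((Real.hasDerivAt_sinh t).const_mul (-x)).fun_sub ((hasDerivAt_id t).const_mul ν)).congr_deriv (by simp)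
    have h2 : HasDerivAt (fun t => -x * cosh t + ν) (-x * sinh t) t :=
      ((Real.hasDerivAt_cosh t).const_mul (-x)).add_const ν
    refine (h2.fun_mul h1.exp).congr_deriv ?_
    have := Real.cosh_sq t
    ring_nf
    rw [this]
    ring
  have hlim : Tendsto (fun t => (-x * cosh t + ν) * exp (-x * sinh t - ν * t)) atTop (𝓝 0) := by
    have hE : Tendsto (fun t => exp (-ν * t)) atTop (𝓝 0) := by
      apply Real.tendsto_exp_atBot.comp
      exact tendsto_id.const_mul_atTop_of_neg (by linarith)
    have hE2 : Tendsto (fun t => (1 + x + ν) * exp (-ν * t)) atTop (𝓝 0) := by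
      simpa using hE.const_mul (1 + x + ν)
    refine squeeze_zero_norm' ?_ hE2
    filter_upwards [eventually_ge_atTop 0] with t ht
    have hs : 0 ≤ sinh t := Real.sinh_nonneg_iff.2 ht
    have hc : cosh t ≤ sinh t + 1 := by
      have := Real.cosh_sub_sinh t
      have h2 : exp (-t) ≤ 1 := Real.exp_le_one_iff.2 (by linarith)
      linarith
    have hc0 := Real.cosh_pos t
    rw [norm_mul, Real.norm_of_nonneg (Real.exp_pos _).le,
      show -x * sinh t - ν * t = -(x * sinh t) + -ν * t by ring, Real.exp_add, ← mul_assoc]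
    apply mul_le_mul_of_nonneg_right _ (Real.exp_pos _).le
    rw [Real.exp_neg, mul_inv_le_iff₀ (Real.exp_pos _)]
    have h3 := Real.add_one_le_exp (x * sinh t)
    have h4 : ‖-x * cosh t + ν‖ ≤ x * (sinh t + 1) + ν := by
      rw [Real.norm_eq_abs, abs_le]
      constructor <;> nlinarith
    have h5 : 0 ≤ x * sinh t := by positivity
    nlinarith [mul_le_mul_of_nonneg_left h3 (show 0 ≤ 1 + x + ν by positivity), mul_nonneg hν.le h5, mul_nonneg hx.le h5]
  rw [integral_Ioi_of_hasDerivAt_of_tendsto' hd i3 hlim]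
  simp
  ring

noncomputable def besselD (ν x : ℝ) : ℝ := (1 / π) * bS1 ν x - (sin (ν * π) / π) * bK 1 ν x
noncomputable def besselD2 (ν x : ℝ) : ℝ := (1 / π) * bC2 ν x - (sin (ν * π) / π) * bK 2 ν x

lemma besselJ_eq (ν x : ℝ) : besselJ ν x = (1 / π) * bC0 ν x - (sin (ν * π) / π) * bK 0 ν x := by
  simp [besselJ, bC0, bK]

lemma besselJ_deriv {ν x : ℝ} (hν : 0 < ν) (hx : 0 < x) : HasDerivAt (besselJ ν) (besselD ν x) x := by
  have : besselJ ν = fun x => (1 / π) * bC0 ν x - (sin (ν * π) / π) * bK 0 ν x := funext (besselJ_eq ν)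
  rw [this]
  exact ((bC0_deriv ν x).const_mul _).fun_sub ((bK_deriv 0 hν hx).const_mul _)

lemma besselD_deriv {ν x : ℝ} (hν : 0 < ν) (hx : 0 < x) : HasDerivAt (besselD ν) (besselD2 ν x) x :=
  ((bS1_deriv ν x).const_mul _).fun_sub ((bK_deriv 1 hν hx).const_mul _)

lemma bessel_ode {ν x : ℝ} (hν : 0 < ν) (hx : 0 < x) :
    x ^ 2 * besselD2 ν x + x * besselD ν x + (x ^ 2 - ν ^ 2) * besselJ ν x = 0 := by
  rw [besselJ_eq]
  unfold besselD besselD2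
  have h1 := bC_ode ν x
  have h2 := bK_ode hν hx
  linear_combination (1 / π) * h1 - (sin (ν * π) / π) * h2

lemma bessel_BSol {ν : ℝ} (hν : 0 < ν) :
    BSol ν (fun t => besselJ ν (exp t)) (fun t => exp t * besselD ν (exp t)) := by
  constructor
  · intro t
    exact ((besselJ_deriv hν (Real.exp_pos t)).comp t (Real.hasDerivAt_exp t)).congr_deriv (by ring)
  · intro t
    have h1 := (besselD_deriv hν (Real.exp_pos t)).comp t (Real.hasDerivAt_exp t)
    refine ((Real.hasDerivAt_exp t).fun_mul h1).congr_deriv ?_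
    have := bessel_ode hν (Real.exp_pos t)
    simp only [Function.comp]
    linear_combination this

lemma bK0_le {ν x : ℝ} (hν : 0 < ν) (hx : 0 < x) : |bK 0 ν x| ≤ 1 / ν := by
  unfold bK
  rw [← Real.norm_eq_abs]
  have : ∫ t in Ioi (0:ℝ), exp (-ν * t) = 1 / ν := by
    rw [integral_exp_mul_Ioi (by linarith)]; simp [neg_div_neg_eq]
  rw [← this]
  apply norm_integral_le_of_norm_le (exp_neg_integrableOn_Ioi 0 hν)
  filter_upwards [ae_restrict_mem measurableSet_Ioi] with t ht
  simpa using bK_bound 0 (ν := ν) hx le_rfl (le_of_lt ht)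

lemma bK0_le' {ν x : ℝ} (hν : 0 < ν) (hx : 0 < x) : |bK 0 ν x| ≤ 1 / x := by
  unfold bK
  rw [← Real.norm_eq_abs]
  have : ∫ t in Ioi (0:ℝ), exp (-x * t) = 1 / x := by
    rw [integral_exp_mul_Ioi (by linarith)]; simp [neg_div_neg_eq]
  rw [← this]
  apply norm_integral_le_of_norm_le (exp_neg_integrableOn_Ioi 0 hx)
  filter_upwards [ae_restrict_mem measurableSet_Ioi] with t ht
  have ht : 0 < t := ht
  have : t ≤ sinh t := Real.self_le_sinh_iff.2 ht.le
  simp only [pow_zero, one_mul, Real.norm_eq_abs, Real.abs_exp]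
  apply Real.exp_le_exp.2
  nlinarith [mul_pos hν ht]

lemma besselJ_bdd {ν : ℝ} (hν : 0 < ν) : ∃ M, ∀ x > 0, |besselJ ν x| ≤ M := by
  refine ⟨|1 / π| * π + |sin (ν * π) / π| * (1 / ν), fun x hx => ?_⟩
  rw [besselJ_eq]
  refine (abs_sub _ _).trans ?_
  rw [abs_mul, abs_mul]
  gcongr
  · unfold bC0
    have := intervalIntegral.norm_integral_le_of_norm_le_const (a := 0) (b := π) (C := 1)
      (f := fun θ => cos (x * sin θ - ν * θ)) (fun t _ => Real.abs_cos_le_one _)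
    simpa [abs_of_pos Real.pi_pos] using this
  · exact bK0_le hν hx

lemma bC0_fold (ν x : ℝ) : bC0 ν x =
    2 * ∫ s in (0:ℝ)..(π / 2), cos (x * cos s - ν * π / 2) * cos (ν * s) := by
  unfold bC0
  have h1 : ∫ s in (-(π / 2))..(π / 2), cos (x * sin (s + π / 2) - ν * (s + π / 2)) =
      ∫ θ in (0:ℝ)..π, cos (x * sin θ - ν * θ) := by
    rw [intervalIntegral.integral_comp_add_right (fun θ => cos (x * sin θ - ν * θ))]
    congr 1 <;> ring
  rw [← h1, ← intervalIntegral.integral_add_adjacent_intervals (b := 0)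
    ((by fun_prop : Continuous _).intervalIntegrable _ _)
    ((by fun_prop : Continuous _).intervalIntegrable _ _)]
  have h2 : ∫ s in (-(π / 2))..0, cos (x * sin (s + π / 2) - ν * (s + π / 2)) =
      ∫ s in (0:ℝ)..(π / 2), cos (x * sin (-s + π / 2) - ν * (-s + π / 2)) := by
    rw [intervalIntegral.integral_comp_neg (fun s => cos (x * sin (s + π / 2) - ν * (s + π / 2)))]
    simp
  rw [h2, ← intervalIntegral.integral_add
    ((by fun_prop : Continuous _).intervalIntegrable _ _)
    ((by fun_prop : Continuous _).intervalIntegrable _ _),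
    ← intervalIntegral.integral_const_mul]
  apply intervalIntegral.integral_congr
  intro s _
  simp only [Real.sin_add_pi_div_two, Real.cos_neg]
  rw [show x * cos s - ν * (-s + π / 2) = (x * cos s - ν * π / 2) + ν * s by ring,
    show x * cos s - ν * (s + π / 2) = (x * cos s - ν * π / 2) - ν * s by ring,
    Real.cos_add (x * cos s - ν * π / 2), Real.cos_sub (x * cos s - ν * π / 2) (ν * s)]
  ring

lemma bmain_subst (x a : ℝ) :
    ∫ s in (0:ℝ)..(π / 2), cos (x * cos s - a) * cos (s / 2) =
      √2 * ∫ y in (0:ℝ)..1, cos (x - a - x * y ^ 2) := by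
  have h2 : (√2) ^ 2 = 2 := Real.sq_sqrt (by norm_num)
  have h := intervalIntegral.integral_comp_mul_deriv (a := 0) (b := π / 2)
    (f := fun s => √2 * sin (s / 2)) (f' := fun s => √2 / 2 * cos (s / 2))
    (g := fun y => cos (x - a - x * y ^ 2))
    (by
      intro s _
      have h1 : HasDerivAt (fun s : ℝ => s / 2) (1 / 2) s := (hasDerivAt_id s).div_const 2
      exact (h1.sin.const_mul (√2)).congr_deriv (by ring))
    (by fun_prop) (by fun_prop)
  have e1 : √2 * sin (π / 2 / 2) = 1 := by
    rw [show π / 2 / 2 = π / 4 by ring, Real.sin_pi_div_four]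
    nlinarith
  simp only [e1, zero_div, Real.sin_zero, mul_zero] at h
  rw [← h, ← intervalIntegral.integral_const_mul]
  apply intervalIntegral.integral_congr
  intro s _
  simp only [Function.comp]
  have e2 : x * cos s - a = x - a - x * (√2 * sin (s / 2)) ^ 2 := by
    rw [mul_pow, h2, Real.sin_sq, Real.cos_sq, show 2 * (s / 2) = s by ring]
    ring
  rw [e2]
  linear_combination (-cos (x - a - x * (√2 * sin (s / 2)) ^ 2) * cos (s / 2) / 2) * h2

lemma brem {ν x a : ℝ} (hx : 1 ≤ x) :
    |∫ s in (0:ℝ)..(π / 2), cos (x * cos s - a) * (cos (ν * s) - cos (s / 2))| ≤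
      ((ν ^ 2 + 1) * π ^ 2 / 2 + (ν ^ 2 + 1) * π ^ 2 / 2 * (π / 2) + 2) / x := by
  set B := ν ^ 2 + 1 with hB
  have hBpos : 0 < B := by positivity
  have hx0 : 0 < x := by linarith
  have hpi := Real.pi_gt_three
  have hε : 0 < 1 / x := by positivity
  have hε1 : 1 / x ≤ 1 := by rw [div_le_one hx0]; exact hx
  have hD : ∀ s, |cos (ν * s) - cos (s / 2)| ≤ B * s ^ 2 := by
    intro s
    have h1 := Real.one_sub_sq_div_two_le_cos (x := ν * s)
    have h2 := Real.one_sub_sq_div_two_le_cos (x := s / 2)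
    have h3 := Real.cos_le_one (ν * s)
    have h4 := Real.cos_le_one (s / 2)
    have h5 : 0 ≤ (ν * s) ^ 2 := sq_nonneg _
    have h6 : 0 ≤ s ^ 2 := sq_nonneg _
    rw [abs_le, hB]
    constructor <;> nlinarith
  have hD' : ∀ s, 0 ≤ s → |-(ν * sin (ν * s)) + sin (s / 2) / 2| ≤ B * s := by
    intro s hs
    have h1 : |ν * sin (ν * s)| ≤ ν ^ 2 * s := by
      rw [abs_mul]
      have : |sin (ν * s)| ≤ |ν * s| := Real.abs_sin_le_abs
      rw [abs_mul, abs_of_nonneg hs] at this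
      calc |ν| * |sin (ν * s)| ≤ |ν| * (|ν| * s) := by gcongr
        _ = ν ^ 2 * s := by rw [← sq_abs ν]; ring
    have h2 : |sin (s / 2)| ≤ |s / 2| := Real.abs_sin_le_abs
    rw [abs_of_nonneg (by positivity : 0 ≤ s / 2)] at h2
    rw [abs_le] at *
    rw [hB]
    constructor <;> linarith [h1.1, h1.2, h2.1, h2.2]
  have hsin : ∀ s, 0 ≤ s → s ≤ π / 2 → 2 / π * s ≤ sin s := fun s h1 h2 => Real.mul_le_sin h1 h2
  have hsinp : ∀ s ∈ Icc (1 / x) (π / 2), 0 < sin s := by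
    intro s hs
    exact Real.sin_pos_of_pos_of_lt_pi (lt_of_lt_of_le hε hs.1) (by linarith [hs.2])
  have hle : 1 / x ≤ π / 2 := by linarith
  set K : ℝ → ℝ := fun s => (cos (ν * s) - cos (s / 2)) / sin s with hK
  set K' : ℝ → ℝ := fun s => ((-(ν * sin (ν * s)) + sin (s / 2) / 2) * sin s -
    (cos (ν * s) - cos (s / 2)) * cos s) / sin s ^ 2 with hK'
  have hKb : ∀ s ∈ Icc (1 / x) (π / 2), |K s| ≤ B * π ^ 2 / 4 := by
    intro s hs
    have hs0 : 0 < s := lt_of_lt_of_le hε hs.1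
    have h1 := hsinp s hs
    have h2 := hsin s hs0.le hs.2
    rw [hK]
    simp only
    rw [abs_div, abs_of_pos h1, div_le_iff₀ h1]
    have h3 : B * π ^ 2 / 4 * (2 / π * s) ≤ B * π ^ 2 / 4 * sin s := by gcongr
    have h4 : B * π ^ 2 / 4 * (2 / π * s) = B * s * (π / 2) := by field_simp; ring
    have h5 : B * s * s ≤ B * s * (π / 2) := by
      apply mul_le_mul_of_nonneg_left hs.2 (by positivity)
    nlinarith [hD s]
  have hK'b : ∀ s ∈ Icc (1 / x) (π / 2), |K' s| ≤ B * π ^ 2 / 2 := by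
    intro s hs
    have hs0 : 0 < s := lt_of_lt_of_le hε hs.1
    have h1 := hsinp s hs
    have h2 := hsin s hs0.le hs.2
    rw [hK']
    simp only
    rw [abs_div, abs_of_pos (by positivity : 0 < sin s ^ 2), div_le_iff₀ (by positivity)]
    have h3 : |(-(ν * sin (ν * s)) + sin (s / 2) / 2) * sin s -
      (cos (ν * s) - cos (s / 2)) * cos s| ≤ B * s * s + B * s ^ 2 * 1 := by
      refine (abs_sub _ _).trans ?_
      rw [abs_mul, abs_mul]
      have h4 := hD' s hs0.le
      have h5 := hD s
      have h6 : |sin s| ≤ s := by rw [abs_of_pos h1]; exact Real.sin_le hs0.le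
      have h7 := Real.abs_cos_le_one s
      gcongr
    have h4 : (2 / π * s) ^ 2 ≤ sin s ^ 2 := by gcongr
    have h5 : B * π ^ 2 / 2 * (2 / π * s) ^ 2 = B * s * s + B * s ^ 2 * 1 := by field_simp; ring
    have h6 : B * π ^ 2 / 2 * (2 / π * s) ^ 2 ≤ B * π ^ 2 / 2 * sin s ^ 2 := by gcongr
    linarith
  have hKd : ∀ s ∈ Icc (1 / x) (π / 2), HasDerivAt K (K' s) s := by
    intro s hs
    have h1 : HasDerivAt (fun s : ℝ => s / 2) (1 / 2) s := (hasDerivAt_id s).div_const 2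
    have h2 : HasDerivAt (fun s : ℝ => ν * s) ν s := by simpa using (hasDerivAt_id s).const_mul ν
    exact ((h2.cos.fun_sub h1.cos).fun_div (Real.hasDerivAt_sin s) (hsinp s hs).ne').congr_deriv
      (by rw [hK']; simp only; ring)
  have hcK' : ContinuousOn K' (Icc (1 / x) (π / 2)) := by
    rw [hK']
    apply ContinuousOn.div
    · fun_prop
    · fun_prop
    · intro s hs; exact pow_ne_zero _ (hsinp s hs).ne'
  have hi1 : IntervalIntegrable (fun s => sin (x * cos s - a) * K' s) volume (1 / x) (π / 2) := by
    apply ContinuousOn.intervalIntegrable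
    rw [uIcc_of_le hle]
    exact ContinuousOn.mul (by fun_prop) hcK'
  have hi2 : ∀ u v : ℝ, IntervalIntegrable
      (fun s => cos (x * cos s - a) * (cos (ν * s) - cos (s / 2))) volume u v :=
    fun u v => (by fun_prop : Continuous _).intervalIntegrable _ _
  have hF := intervalIntegral.integral_eq_sub_of_hasDerivAt (a := 1 / x) (b := π / 2)
    (f := fun s => -(1 / x) * (sin (x * cos s - a) * K s))
    (f' := fun s => cos (x * cos s - a) * (cos (ν * s) - cos (s / 2)) -
      (1 / x) * (sin (x * cos s - a) * K' s))
    (by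
      rw [uIcc_of_le hle]
      intro s hs
      have h1 : HasDerivAt (fun s => x * cos s - a) (x * -sin s) s :=
        ((Real.hasDerivAt_cos s).const_mul x).sub_const a
      refine ((h1.sin.fun_mul (hKd s hs)).const_mul (-(1 / x))).congr_deriv ?_
      have h2 : K s * sin s = cos (ν * s) - cos (s / 2) := by
        rw [hK]; simp only
        exact div_mul_cancel₀ _ (hsinp s hs).ne'
      rw [← h2]
      field_simp
      ring)
    ((hi2 _ _).sub (hi1.const_mul _))
  rw [intervalIntegral.integral_sub (hi2 _ _) (hi1.const_mul _),
    intervalIntegral.integral_const_mul] at hF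
  rw [← intervalIntegral.integral_add_adjacent_intervals (hi2 0 (1 / x)) (hi2 (1 / x) (π / 2))]
  have hA1 : |∫ s in (0:ℝ)..(1 / x), cos (x * cos s - a) * (cos (ν * s) - cos (s / 2))| ≤ 2 / x := by
    have := intervalIntegral.norm_integral_le_of_norm_le_const (a := 0) (b := 1 / x) (C := 2)
      (f := fun s => cos (x * cos s - a) * (cos (ν * s) - cos (s / 2))) (by
        intro s _
        rw [norm_mul]
        have h1 := Real.abs_cos_le_one (x * cos s - a)
        have h2 : |cos (ν * s) - cos (s / 2)| ≤ 1 + 1 :=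
          (abs_sub _ _).trans (add_le_add (Real.abs_cos_le_one _) (Real.abs_cos_le_one _))
        simp only [Real.norm_eq_abs]
        calc _ ≤ 1 * (1 + 1 : ℝ) := by gcongr
          _ = 2 := by norm_num)
    rw [Real.norm_eq_abs, sub_zero, abs_of_pos hε] at this
    linarith [show 2 * (1 / x) = 2 / x by ring]
  have hA2 : |∫ s in (1 / x)..(π / 2), sin (x * cos s - a) * K' s| ≤ B * π ^ 2 / 2 * (π / 2) := by
    have := intervalIntegral.norm_integral_le_of_norm_le_const (a := 1 / x) (b := π / 2)
      (C := B * π ^ 2 / 2) (f := fun s => sin (x * cos s - a) * K' s) (by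
        intro s hs
        rw [uIoc_of_le hle] at hs
        rw [norm_mul]
        have h1 := Real.abs_sin_le_one (x * cos s - a)
        have h2 := hK'b s ⟨hs.1.le, hs.2⟩
        simp only [Real.norm_eq_abs]
        calc _ ≤ 1 * (B * π ^ 2 / 2) := by gcongr
          _ = _ := by ring)
    rw [Real.norm_eq_abs] at this
    refine this.trans ?_
    have h3 : |π / 2 - 1 / x| ≤ π / 2 := by rw [abs_of_nonneg (by linarith)]; linarith
    gcongr
  have hA3 : ∀ s ∈ Icc (1 / x) (π / 2), |sin (x * cos s - a) * K s| ≤ B * π ^ 2 / 4 := by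
    intro s hs
    rw [abs_mul]
    have h1 := Real.abs_sin_le_one (x * cos s - a)
    have h2 := hKb s hs
    calc _ ≤ 1 * (B * π ^ 2 / 4) := by gcongr
      _ = _ := by ring
  have hA4 := hA3 (π / 2) ⟨hle, le_rfl⟩
  have hA5 := hA3 (1 / x) ⟨le_rfl, hle⟩
  have e : ∫ s in (1 / x)..(π / 2), cos (x * cos s - a) * (cos (ν * s) - cos (s / 2)) =
      (1 / x) * ((∫ s in (1 / x)..(π / 2), sin (x * cos s - a) * K' s) -
        sin (x * cos (π / 2) - a) * K (π / 2) + sin (x * cos (1 / x) - a) * K (1 / x)) := by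
    linear_combination hF
  have hA6 : |∫ s in (1 / x)..(π / 2), cos (x * cos s - a) * (cos (ν * s) - cos (s / 2))| ≤
      (1 / x) * (B * π ^ 2 / 2 * (π / 2) + B * π ^ 2 / 2) := by
    rw [e, abs_mul, abs_of_pos hε]
    apply mul_le_mul_of_nonneg_left _ hε.le
    rw [abs_le] at *
    constructor <;> linarith [hA2.1, hA2.2, hA4.1, hA4.2, hA5.1, hA5.2]
  refine (abs_add_le _ _).trans ?_
  refine (add_le_add hA1 hA6).trans (le_of_eq ?_)
  ring

lemma bgauss_int {b : ℂ} (hb : 0 < b.re) : IntegrableOn (fun y : ℝ => Complex.exp (-b * (y : ℂ) ^ 2)) (Ioi 1) :=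
  (integrable_cexp_neg_mul_sq hb).integrableOn

lemma bfres1 {b : ℂ} (hb : 0 < b.re) :
    ‖∫ y in Ioi (1:ℝ), Complex.exp (-b * (y : ℂ) ^ 2)‖ ≤ 1 / ‖b‖ := by
  have hb0 : b ≠ 0 := by rintro rfl; simp at hb
  have hn : 0 < ‖b‖ := norm_pos_iff.2 hb0
  have hexp : ∀ y : ℝ, ‖Complex.exp (-b * (y : ℂ) ^ 2)‖ ≤ 1 := by
    intro y
    rw [Complex.norm_exp]
    apply Real.exp_le_one_iff.2
    have : (-b * (y : ℂ) ^ 2).re = -(b.re * y ^ 2) := by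
      rw [← Complex.ofReal_pow, Complex.re_mul_ofReal]; simp
    rw [this]
    have := mul_nonneg hb.le (sq_nonneg y)
    linarith
  have hb2 : ∀ y ∈ Ioi (1:ℝ), ‖Complex.exp (-b * (y : ℂ) ^ 2) / (2 * b * (y : ℂ) ^ 2)‖ ≤
      1 / (2 * ‖b‖) * y ^ (-2 : ℝ) := by
    intro y hy
    have hy : 1 < y := hy
    rw [norm_div, norm_mul, norm_mul, norm_pow, Complex.norm_real, Real.norm_of_nonneg (by linarith),
      Real.rpow_neg (by linarith), Real.rpow_two, Complex.norm_two]
    rw [div_le_iff₀ (by positivity)]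
    refine (hexp y).trans (le_of_eq ?_)
    field_simp
  have hr : IntegrableOn (fun y : ℝ => 1 / (2 * ‖b‖) * y ^ (-2 : ℝ)) (Ioi 1) :=
    (integrableOn_Ioi_rpow_of_lt (by norm_num) (by norm_num)).const_mul _
  have hi2 : IntegrableOn (fun y : ℝ => Complex.exp (-b * (y : ℂ) ^ 2) / (2 * b * (y : ℂ) ^ 2)) (Ioi 1) := by
    refine Integrable.mono' hr ?_ ?_
    · apply ContinuousOn.aestronglyMeasurable _ measurableSet_Ioi
      apply ContinuousOn.div
      · fun_prop
      · fun_prop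
      · intro y hy
        have hy : 1 < y := hy
        have : (y : ℂ) ≠ 0 := by exact_mod_cast (by linarith : y ≠ 0)
        exact mul_ne_zero (mul_ne_zero two_ne_zero hb0) (pow_ne_zero _ this)
    · filter_upwards [ae_restrict_mem measurableSet_Ioi] with y hy using hb2 y hy
  have hd : ∀ y ∈ Ici (1:ℝ), HasDerivAt (fun y : ℝ => -(Complex.exp (-b * (y : ℂ) ^ 2) / (2 * b * (y : ℂ))))
      (Complex.exp (-b * (y : ℂ) ^ 2) + Complex.exp (-b * (y : ℂ) ^ 2) / (2 * b * (y : ℂ) ^ 2)) y := by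
    intro y hy
    have hy : 1 ≤ y := hy
    have hy0 : (y : ℂ) ≠ 0 := by exact_mod_cast (by linarith : y ≠ 0)
    have h0 : HasDerivAt (fun y : ℝ => (y : ℂ)) 1 y := Complex.ofRealCLM.hasDerivAt
    have h1 := ((h0.fun_pow 2).const_mul (-b)).cexp
    have h2 := h0.const_mul (2 * b)
    refine (h1.fun_div h2 (by simp [hb0, hy0])).fun_neg.congr_deriv ?_
    field_simp
    ring
  have hlim : Tendsto (fun y : ℝ => -(Complex.exp (-b * (y : ℂ) ^ 2) / (2 * b * (y : ℂ)))) atTop (𝓝 0) := by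
    have hE : Tendsto (fun y : ℝ => 1 / (2 * ‖b‖) * y⁻¹) atTop (𝓝 0) := by
      simpa using tendsto_inv_atTop_zero.const_mul (1 / (2 * ‖b‖))
    refine squeeze_zero_norm' ?_ hE
    filter_upwards [eventually_gt_atTop 0] with y hy
    rw [norm_neg, norm_div, norm_mul, norm_mul, Complex.norm_real, Real.norm_of_nonneg hy.le, Complex.norm_two,
      div_le_iff₀ (by positivity)]
    refine (hexp y).trans (le_of_eq ?_)
    field_simp
  have hI := integral_Ioi_of_hasDerivAt_of_tendsto' hd ((bgauss_int hb).add hi2) hlim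
  rw [integral_add (bgauss_int hb) hi2] at hI
  have hI2 : ‖∫ y in Ioi (1:ℝ), Complex.exp (-b * (y : ℂ) ^ 2) / (2 * b * (y : ℂ) ^ 2)‖ ≤ 1 / (2 * ‖b‖) := by
    have h1 : ∫ y in Ioi (1:ℝ), 1 / (2 * ‖b‖) * y ^ (-2 : ℝ) = 1 / (2 * ‖b‖) := by
      rw [integral_const_mul, integral_Ioi_rpow_of_lt (by norm_num) (by norm_num)]
      norm_num
    rw [← h1]
    apply norm_integral_le_of_norm_le hr
    filter_upwards [ae_restrict_mem measurableSet_Ioi] with y hy using hb2 y hy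
  have hI3 : ‖(0:ℂ) - -(Complex.exp (-b * ((1:ℝ) : ℂ) ^ 2) / (2 * b * ((1:ℝ) : ℂ)))‖ ≤ 1 / (2 * ‖b‖) := by
    rw [zero_sub, neg_neg, norm_div, norm_mul, norm_mul, Complex.norm_two]
    simp only [Complex.ofReal_one, norm_one, mul_one]
    have := hexp 1
    simp only [Complex.ofReal_one] at this
    gcongr
  rw [eq_sub_of_add_eq hI]
  refine (norm_sub_le _ _).trans ((add_le_add hI3 hI2).trans (le_of_eq ?_))
  field_simp
  norm_num

lemma bfres2 {b : ℂ} (hb : 0 < b.re) :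
    ‖(∫ y in (0:ℝ)..1, Complex.exp (-b * (y : ℂ) ^ 2)) - (π / b) ^ (1 / 2 : ℂ) / 2‖ ≤ 1 / ‖b‖ := by
  rw [← integral_gaussian_complex_Ioi hb, intervalIntegral.integral_of_le zero_le_one,
    ← Ioc_union_Ioi_eq_Ioi (zero_le_one' ℝ),
    setIntegral_union (Set.Ioc_disjoint_Ioi le_rfl) measurableSet_Ioi
      (integrable_cexp_neg_mul_sq hb).integrableOn (bgauss_int hb)]
  rw [sub_add_cancel_left, norm_neg]
  exact bfres1 hb

lemma bfres3 {x : ℝ} (hx : 0 < x) :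
    ‖(∫ y in (0:ℝ)..1, Complex.exp (-(Complex.I * x) * (y : ℂ) ^ 2)) - (π / (Complex.I * x)) ^ (1 / 2 : ℂ) / 2‖ ≤ 1 / x := by
  have hne : ∀ ε : ℝ, (ε : ℂ) + Complex.I * x ≠ 0 := by
    intro ε h
    have := congrArg Complex.im h
    simp at this
    linarith
  have hT : Tendsto (fun ε : ℝ => ‖(∫ y in (0:ℝ)..1, Complex.exp (-((ε : ℂ) + Complex.I * x) * (y : ℂ) ^ 2)) -
      (π / ((ε : ℂ) + Complex.I * x)) ^ (1 / 2 : ℂ) / 2‖) (𝓝[>] 0)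
      (𝓝 ‖(∫ y in (0:ℝ)..1, Complex.exp (-(((0:ℝ) : ℂ) + Complex.I * x) * (y : ℂ) ^ 2)) -
      (π / (((0:ℝ) : ℂ) + Complex.I * x)) ^ (1 / 2 : ℂ) / 2‖) := by
    apply tendsto_nhdsWithin_of_tendsto_nhds
    apply Tendsto.norm
    apply Tendsto.sub
    · have : Continuous (fun ε : ℝ => ∫ y in (0:ℝ)..1, Complex.exp (-((ε : ℂ) + Complex.I * x) * (y : ℂ) ^ 2)) := by
        apply intervalIntegral.continuous_parametric_intervalIntegral_of_continuous'
        fun_prop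
      exact this.tendsto 0
    · apply Tendsto.div_const
      have h1 : ContinuousAt (fun ε : ℝ => (π : ℂ) / ((ε : ℂ) + Complex.I * x)) 0 := by
        have h0 : ContinuousAt (fun ε : ℝ => (ε : ℂ) + Complex.I * x) 0 := by fun_prop
        exact ContinuousAt.div₀ continuousAt_const h0 (hne 0)
      have h2 : (π : ℂ) / (((0:ℝ) : ℂ) + Complex.I * x) ∈ Complex.slitPlane := by
        right
        have : (π : ℂ) / (((0:ℝ) : ℂ) + Complex.I * x) = ((-(π / x) : ℝ) : ℂ) * Complex.I := by
          have hx' : (x : ℂ) ≠ 0 := by exact_mod_cast hx.ne'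
          push_cast
          rw [zero_add]
          field_simp
          rw [Complex.I_sq]; ring
        rw [this, Complex.im_ofReal_mul, Complex.I_im]
        have : 0 < π / x := by positivity
        linarith
      exact (continuousAt_cpow_const h2).tendsto.comp h1.tendsto
  have := le_of_tendsto hT (b := 1 / x) (by
    filter_upwards [self_mem_nhdsWithin] with ε hε
    have hε : 0 < ε := hε
    refine (bfres2 (b := (ε : ℂ) + Complex.I * x) (by simpa using hε)).trans ?_
    apply one_div_le_one_div_of_le hx
    have := Complex.abs_im_le_norm ((ε : ℂ) + Complex.I * x)
    simp at this
    exact (le_abs_self x).trans this)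
  simpa using this

lemma bcpow {x : ℝ} (hx : 0 < x) : (π / (Complex.I * x) : ℂ) ^ (1 / 2 : ℂ) =
    (√(π / x) : ℝ) * Complex.exp (((-(π / 4) : ℝ) : ℂ) * Complex.I) := by
  have hx' : (x : ℂ) ≠ 0 := by exact_mod_cast hx.ne'
  have hp : 0 < π / x := by positivity
  have h1 : (π / (Complex.I * x) : ℂ) = ((π / x : ℝ) : ℂ) * (-Complex.I) := by
    push_cast
    field_simp
    rw [Complex.I_sq]; ring
  have hI : -Complex.I ≠ 0 := by simp
  have hs : √(π / x) = Real.exp (Real.log (π / x) * (1 / 2)) := by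
    rw [Real.sqrt_eq_rpow, Real.rpow_def_of_pos hp]
  rw [h1, Complex.cpow_def_of_ne_zero (mul_ne_zero (by exact_mod_cast hp.ne') hI),
    Complex.log_ofReal_mul hp hI, Complex.log_neg_I, hs, Complex.ofReal_exp, ← Complex.exp_add]
  congr 1
  push_cast
  ring

lemma bfres {x : ℝ} (a : ℝ) (hx : 0 < x) :
    |(∫ y in (0:ℝ)..1, cos (x - a - x * y ^ 2)) - √(π / x) / 2 * cos (x - a - π / 4)| ≤ 1 / x := by
  have h := bfres3 hx
  rw [bcpow hx] at h
  have e1 : ‖Complex.exp (((x - a : ℝ) : ℂ) * Complex.I)‖ = 1 := Complex.norm_exp_ofReal_mul_I _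
  have h2 : ‖Complex.exp (((x - a : ℝ) : ℂ) * Complex.I) *
      ((∫ y in (0:ℝ)..1, Complex.exp (-(Complex.I * x) * (y : ℂ) ^ 2)) -
      (√(π / x) : ℝ) * Complex.exp (((-(π / 4) : ℝ) : ℂ) * Complex.I) / 2)‖ ≤ 1 / x := by
    rw [norm_mul, e1, one_mul]; exact h
  refine le_trans (le_of_eq ?_) ((Complex.abs_re_le_norm _).trans h2)
  congr 1
  rw [mul_sub, Complex.sub_re, ← intervalIntegral.integral_const_mul]
  congr 1
  · have hi : IntervalIntegrable (fun y : ℝ => Complex.exp (((x - a : ℝ) : ℂ) * Complex.I) *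
        Complex.exp (-(Complex.I * x) * (y : ℂ) ^ 2)) volume 0 1 :=
      (by fun_prop : Continuous _).intervalIntegrable _ _
    have := Complex.reCLM.intervalIntegral_comp_comm hi
    simp only [Complex.reCLM_apply] at this
    rw [← this]
    apply intervalIntegral.integral_congr
    intro y _
    simp only
    rw [← Complex.exp_add, ← Complex.exp_ofReal_mul_I_re]
    congr 2
    push_cast
    ring
  · rw [show Complex.exp (((x - a : ℝ) : ℂ) * Complex.I) * ((√(π / x) : ℝ) *
      Complex.exp (((-(π / 4) : ℝ) : ℂ) * Complex.I) / 2) =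
      ((√(π / x) / 2 : ℝ) : ℂ) * Complex.exp (((x - a - π / 4 : ℝ) : ℂ) * Complex.I) by
        rw [show ((x - a - π / 4 : ℝ) : ℂ) * Complex.I = ((x - a : ℝ) : ℂ) * Complex.I +
          ((-(π / 4) : ℝ) : ℂ) * Complex.I by push_cast; ring, Complex.exp_add]
        push_cast
        ring]
    rw [Complex.re_ofReal_mul, Complex.exp_ofReal_mul_I_re]

lemma bessel_asymp_bound {ν : ℝ} (hν : 0 < ν) : ∃ C, ∀ x, 1 ≤ x →
    |besselJ ν x - √(2 / π) * (1 / √x) * cos (x - ν * π / 2 - π / 4)| ≤ C / x := by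
  refine ⟨1 / π * (2 * (√2 * 1 + ((ν ^ 2 + 1) * π ^ 2 / 2 + (ν ^ 2 + 1) * π ^ 2 / 2 * (π / 2) + 2))) +
    |sin (ν * π) / π| * 1, fun x hx => ?_⟩
  have hx0 : 0 < x := by linarith
  have hr := brem (ν := ν) (a := ν * π / 2) hx
  have hf := bfres (ν * π / 2) hx0
  have hk := bK0_le' hν hx0
  set R := ∫ s in (0:ℝ)..(π / 2), cos (x * cos s - ν * π / 2) * (cos (ν * s) - cos (s / 2)) with hR
  set F := ∫ y in (0:ℝ)..1, cos (x - ν * π / 2 - x * y ^ 2) with hF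
  have h1 : ∫ s in (0:ℝ)..(π / 2), cos (x * cos s - ν * π / 2) * cos (ν * s) = √2 * F + R := by
    rw [hF, ← bmain_subst, hR, ← intervalIntegral.integral_add
      ((by fun_prop : Continuous _).intervalIntegrable _ _)
      ((by fun_prop : Continuous _).intervalIntegrable _ _)]
    apply intervalIntegral.integral_congr
    intro s _
    simp only
    ring
  have h2 : √(2 / π) * (1 / √x) = 1 / π * (2 * (√2 * (√(π / x) / 2))) := by
    rw [Real.sqrt_div (by norm_num), Real.sqrt_div Real.pi_pos.le]
    have hp : (√π) ^ 2 = π := Real.sq_sqrt Real.pi_pos.le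
    have hp0 : 0 < √π := Real.sqrt_pos.2 Real.pi_pos
    have hx1 : 0 < √x := Real.sqrt_pos.2 hx0
    have : π = √π * √π := by rw [← hp]; simp [pow_two]
    rw [show (1:ℝ) / π = 1 / (√π * √π) by rw [← this]]
    field_simp
  rw [besselJ_eq, bC0_fold, h1, h2]
  have e : 1 / π * (2 * (√2 * F + R)) - sin (ν * π) / π * bK 0 ν x -
      1 / π * (2 * (√2 * (√(π / x) / 2))) * cos (x - ν * π / 2 - π / 4) =
      1 / π * (2 * (√2 * (F - √(π / x) / 2 * cos (x - ν * π / 2 - π / 4)) + R)) -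
        sin (ν * π) / π * bK 0 ν x := by ring
  rw [e]
  set G := F - √(π / x) / 2 * cos (x - ν * π / 2 - π / 4) with hG
  have hGR : |√2 * G + R| ≤ √2 * (1 / x) +
      ((ν ^ 2 + 1) * π ^ 2 / 2 + (ν ^ 2 + 1) * π ^ 2 / 2 * (π / 2) + 2) / x := by
    refine (abs_add_le _ _).trans (add_le_add ?_ hr)
    rw [abs_mul, abs_of_nonneg (Real.sqrt_nonneg _)]
    gcongr
  refine (abs_sub _ _).trans ?_
  rw [abs_mul, abs_mul, abs_mul, abs_of_pos (by positivity : 0 < 1 / π), abs_two]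
  have : 1 / π * (2 * |√2 * G + R|) + |sin (ν * π) / π| * |bK 0 ν x| ≤
    1 / π * (2 * (√2 * (1 / x) +
      ((ν ^ 2 + 1) * π ^ 2 / 2 + (ν ^ 2 + 1) * π ^ 2 / 2 * (π / 2) + 2) / x)) +
      |sin (ν * π) / π| * (1 / x) := by gcongr
  refine this.trans (le_of_eq ?_)
  ring

lemma bessel_asymp {ν : ℝ} (hν : 0 < ν) :
    Tendsto (fun t => exp (t / 2) * besselJ ν (exp t) - √(2 / π) * cos (exp t - ν * π / 2 - π / 4))
      atTop (𝓝 0) := by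
  obtain ⟨C, hC⟩ := bessel_asymp_bound hν
  have hE : Tendsto (fun t => C * exp (-(t / 2))) atTop (𝓝 0) := by
    have : Tendsto (fun t : ℝ => exp (-(t / 2))) atTop (𝓝 0) :=
      Real.tendsto_exp_neg_atTop_nhds_zero.comp (tendsto_id.atTop_div_const (by norm_num))
    simpa using this.const_mul C
  refine squeeze_zero_norm' ?_ hE
  filter_upwards [eventually_ge_atTop 0] with t ht
  have h := hC (exp t) (Real.one_le_exp ht)
  have hs : √(exp t) = exp (t / 2) := by
    rw [show exp t = exp (t / 2) ^ 2 by rw [← Real.exp_nat_mul]; congr 1; push_cast; ring,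
      Real.sqrt_sq (Real.exp_pos _).le]
  have hs2 : exp t = exp (t / 2) * exp (t / 2) := by rw [← Real.exp_add]; congr 1; ring
  rw [hs] at h
  have hp := Real.exp_pos (t / 2)
  have e : exp (t / 2) * besselJ ν (exp t) - √(2 / π) * cos (exp t - ν * π / 2 - π / 4) =
    exp (t / 2) * (besselJ ν (exp t) - √(2 / π) * (1 / exp (t / 2)) * cos (exp t - ν * π / 2 - π / 4)) := by
    field_simp
  rw [e, Real.norm_eq_abs, abs_mul, abs_of_pos hp, Real.exp_neg]
  calc _ ≤ exp (t / 2) * (C / exp t) := by gcongr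
    _ = C * (exp (t / 2))⁻¹ := by rw [hs2]; field_simp

lemma bessel_nontriv {ν : ℝ} (hν : 0 < ν) : ∃ t, besselJ ν (exp t) ≠ 0 := by
  by_contra hcon
  push Not at hcon
  have h := bessel_asymp hν
  simp only [hcon, mul_zero, zero_sub] at h
  have h1 := h.comp Real.tendsto_log_atTop
  have h2 : Tendsto (fun m : ℕ => ν * π / 2 + π / 4 + m * (2 * π)) atTop atTop :=
    tendsto_atTop_add_const_left _ _ (tendsto_natCast_atTop_atTop.atTop_mul_const (by positivity))
  have h3 := h1.comp h2
  have h4 : Tendsto (fun _ : ℕ => -√(2 / π)) atTop (𝓝 0) := by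
    refine h3.congr fun m => ?_
    simp only [Function.comp]
    rw [Real.exp_log (by positivity), show ν * π / 2 + π / 4 + m * (2 * π) - ν * π / 2 - π / 4 = m * (2 * π) by ring,
      Real.cos_nat_mul_two_pi, mul_one]
  have h5 := tendsto_nhds_unique h4 tendsto_const_nhds
  have : 0 < √(2 / π) := Real.sqrt_pos.2 (by positivity)
  linarith

lemma bessel_ncard {ν j : ℝ} (hj : 0 < j) :
    {t | t < Real.log j ∧ besselJ ν (exp t) = 0}.ncard = {x : ℝ | 0 < x ∧ x < j ∧ besselJ ν x = 0}.ncard := by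
  rw [← Set.ncard_image_of_injective _ Real.exp_injective]
  congr 1
  ext x
  constructor
  · rintro ⟨t, ⟨h1, h2⟩, rfl⟩
    exact ⟨Real.exp_pos t, (Real.lt_log_iff_exp_lt hj).1 h1, h2⟩
  · rintro ⟨h1, h2, h3⟩
    exact ⟨Real.log x, ⟨Real.log_lt_log h1 h2, by rw [Real.exp_log h1]; exact h3⟩, Real.exp_log h1⟩

/-- for large `ν`, the zeros with `j ≥ (1+c)ν` satisfy
`j g(ν/j) = k - 1/4 + O(1/(ν+k))`. -/
theorem zero_approx_large_nu_away (c : ℝ) (hc : 0 < c) :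
    ∃ N C : ℝ, 0 < N ∧ 0 < C ∧ ∀ ν : ℝ, N ≤ ν → ∀ k : ℕ, 1 ≤ k → ∀ j : ℝ,
      IsKthZero ν k j → (1 + c) * ν ≤ j →
      |j * gfun (ν / j) - ((k : ℝ) - 1 / 4)| ≤ C / (ν + (k : ℝ)) := by
  have hκ0 : 0 < 1 - (1 / (1 + c)) ^ 2 := by
    have h1 : 1 / (1 + c) < 1 := by rw [div_lt_one (by linarith)]; linarith
    have h2 : 0 < 1 / (1 + c) := by positivity
    nlinarith
  obtain ⟨κ, hκ, hκ2⟩ : ∃ κ : ℝ, 0 < κ ∧ κ ^ 2 = 1 - (1 / (1 + c)) ^ 2 :=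
    ⟨√(1 - (1 / (1 + c)) ^ 2), Real.sqrt_pos.2 hκ0, Real.sq_sqrt hκ0.le⟩
  have hpi := Real.pi_gt_three
  refine ⟨1, 3 / (2 * κ ^ 3), one_pos, by positivity, ?_⟩
  intro ν hν k hk j hj hjc
  obtain ⟨hj0, hJ, hcard⟩ := hj
  have hν0 : 0 < ν := by linarith
  have hνj : ν ≤ j := by nlinarith
  obtain ⟨M, hM⟩ := besselJ_bdd hν0
  have hz := zero_phase (bessel_BSol hν0) hν0 (fun t => hM _ (Real.exp_pos t))
    (Real.sqrt_pos.2 (by positivity : (0:ℝ) < 2 / π)).ne' (bessel_asymp hν0) (a := Real.log j)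
    (by rw [Real.exp_log hj0]; exact hJ) (k - 1) ((bessel_ncard hj0).trans hcard) (bessel_nontriv hν0)
  have hkc : ((k - 1 : ℕ) : ℝ) = (k : ℝ) - 1 := by push_cast [Nat.cast_sub hk]; ring
  rw [hkc] at hz
  unfold bPhi bR at hz
  rw [Real.exp_log hj0] at hz
  have hν1 : ν ≤ 1 / (1 + c) * j := by
    rw [one_div, ← div_eq_inv_mul, le_div_iff₀ (by linarith)]; linarith
  have hlow : (κ * j) ^ 2 ≤ j ^ 2 - ν ^ 2 := by
    rw [mul_pow, hκ2]
    have : ν ^ 2 ≤ (1 / (1 + c) * j) ^ 2 := by gcongr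
    nlinarith
  have hS : κ * j ≤ √(j ^ 2 - ν ^ 2) := Real.le_sqrt_of_sq_le hlow
  have hSj : √(j ^ 2 - ν ^ 2) ≤ j := by
    rw [Real.sqrt_le_left hj0.le]; nlinarith
  have hR : j ^ 2 / (2 * √(j ^ 2 - ν ^ 2) ^ 3) ≤ 1 / (2 * κ ^ 3) / j := by
    calc _ ≤ j ^ 2 / (2 * (κ * j) ^ 3) := by gcongr
      _ = _ := by field_simp
  have hg : j * gfun (ν / j) = (√(j ^ 2 - ν ^ 2) - ν * Real.arccos (ν / j)) / π := by
    unfold gfun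
    have : √(1 - (ν / j) ^ 2) = √(j ^ 2 - ν ^ 2) / j := by
      rw [show 1 - (ν / j) ^ 2 = (j ^ 2 - ν ^ 2) / j ^ 2 by field_simp, Real.sqrt_div' _ (sq_nonneg j),
        Real.sqrt_sq hj0.le]
    rw [this]
    field_simp
  set P := √(j ^ 2 - ν ^ 2) - ν * Real.arccos (ν / j) with hP
  have hPj : P ≤ j := by
    have := mul_nonneg hν0.le (Real.arccos_nonneg (ν / j))
    linarith
  have hk1 : (1:ℝ) ≤ k := by exact_mod_cast hk
  have hkj : ν + k ≤ 3 * j := by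
    have h1 : ((k:ℝ) - 1 / 4) * 3 ≤ ((k:ℝ) - 1 / 4) * π := by gcongr; linarith
    have h2 := hz.1
    have h3 : (k:ℝ) - 1 + 1 - 1 / 4 = k - 1 / 4 := by ring
    rw [h3] at h2
    linarith
  have hfin : 1 / (2 * κ ^ 3) / j ≤ 3 / (2 * κ ^ 3) / (ν + k) := by
    rw [div_le_div_iff₀ hj0 (by positivity)]
    have : 1 / (2 * κ ^ 3) * (ν + k) ≤ 1 / (2 * κ ^ 3) * (3 * j) := by gcongr
    refine this.trans (le_of_eq ?_)
    ring
  rw [hg]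
  have e : P / π - ((k:ℝ) - 1 / 4) = (P - ((k:ℝ) - 1 + 1 - 1 / 4) * π) / π := by field_simp; ring
  have hn : 0 ≤ P - ((k:ℝ) - 1 + 1 - 1 / 4) * π := by linarith [hz.1]
  rw [e, abs_of_nonneg (by positivity)]
  calc _ ≤ P - ((k:ℝ) - 1 + 1 - 1 / 4) * π := div_le_self hn (by linarith)
    _ ≤ 1 / (2 * κ ^ 3) / j := by linarith [hz.2]
    _ ≤ _ := hfin
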